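/- arXiv:2203.07527 — 10 statements merged into one kernel-verified Lean document; each statement's English description precedes it below -/
import Mathlib

section
/- Fix β ∈ ℝ, ε ∈ (0,1], nonempty finite sets X and Z with N_x = |X|, N_z = |Z|, and a probability vector p on X. For a conditional probability family q = (q(z|x)) (each q(·|x) a probability vector on Z), let m_q(z) := ∑_x q(z|x) p(x) be the induced marginal on Z, and define G(q) := (β − 1) H(m_q) + H_q(Z|X), where H(m_q) := −∑_z m_q(z) log m_q(z) and H_q(Z|X) := −∑_x p(x) ∑_z q(z|x) log q(z|x). Then for any two ε-infimal conditional families q, q′: G(q′) ≥ G(q) + ⟨∇G(q), q′ − q⟩ − (σ_G/2) ‖q′ − q‖₂², where σ_G := 2 N_z (|β − 1| + N_x)/ε. That is, G is σ_G-weakly convex on the set of ε-infimal conditional probability families. -/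
/-
The function `G` is built from sums of `-t log t`, so its first-order error is the same
combination of Bregman divergences `D(a, b)` of `t log t`: namely `(β - 1) ∑ D(m_q', m_q)` plus the
`p`-average of the `D(q', q)`. Convexity gives `D(a, b) ≥ 0`, and `log t ≤ t - 1` gives
`D(a, b) ≤ (a - b)² / b`, where `b ≥ ε` both for the entries of `q` and for their averages `m_q`.
By Jensen's inequality `(m_q' - m_q)² ≤ ∑ p (q' - q)²`, so both parts are bounded by the same
squared distance, whatever the sizes of `X` and `Z`. As `∑ D(m_q', m_q) ≥ 0`, only the positive
part of `β - 1` counts, which makes the constant `(β - 1)⁺ + 1 = max β 1`.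
-/

open InformationTheory Real

section Bregman

/-- The Bregman divergence of `t ↦ t * log t`, which is the summand `a log (a / b) - a + b` of the
Kullback–Leibler divergence of unnormalized nonnegative vectors. It measures the first-order error
of the entropy; the convention `0 * log 0 = 0` makes it correct at `a = 0` too. -/
noncomputable def mulLogBregman (a b : ℝ) : ℝ :=
  a * log a - b * log b - (log b + 1) * (a - b)

variable {a b : ℝ}

lemma mulLogBregman_eq_mul_klFun (a : ℝ) (hb : b ≠ 0) :
    mulLogBregman a b = b * klFun (a / b) := by
  rcases eq_or_ne a 0 with rfl | ha
  · simp only [mulLogBregman, klFun, zero_div, log_zero]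
    ring
  · rw [mulLogBregman, klFun, log_div ha hb]
    field_simp
    ring

lemma klFun_le_sq {t : ℝ} (ht : 0 ≤ t) : klFun t ≤ (t - 1) ^ 2 := by
  rcases ht.eq_or_lt with rfl | ht
  · norm_num [klFun_zero]
  · have h : t * log t ≤ t * (t - 1) :=
      mul_le_mul_of_nonneg_left (log_le_sub_one_of_pos ht) ht.le
    rw [klFun_apply]
    linarith

lemma mulLogBregman_nonneg (ha : 0 ≤ a) (hb : 0 < b) : 0 ≤ mulLogBregman a b := by
  rw [mulLogBregman_eq_mul_klFun a hb.ne']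
  exact mul_nonneg hb.le (klFun_nonneg (div_nonneg ha hb.le))

lemma mulLogBregman_le_sq_div (ha : 0 ≤ a) (hb : 0 < b) :
    mulLogBregman a b ≤ (a - b) ^ 2 / b :=
  calc mulLogBregman a b = b * klFun (a / b) := mulLogBregman_eq_mul_klFun a hb.ne'
    _ ≤ b * (a / b - 1) ^ 2 :=
      mul_le_mul_of_nonneg_left (klFun_le_sq (div_nonneg ha hb.le)) hb.le
    _ = (a - b) ^ 2 / b := by field_simp

lemma mulLogBregman_le_sq_div_of_le {ε : ℝ} (hε : 0 < ε) (ha : 0 ≤ a) (hb : ε ≤ b) :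
    mulLogBregman a b ≤ (a - b) ^ 2 / ε :=
  (mulLogBregman_le_sq_div ha (hε.trans_le hb)).trans <|
    div_le_div_of_nonneg_left (sq_nonneg _) hε hb

end Bregman

section PrivacyFunnel

variable {X Z : Type*} [Fintype X] {p : X → ℝ} {q q' : Z → X → ℝ}

/-- The marginal `m_q` on `Z` induced by the conditional family `q z x = q(z|x)` and the
distribution `p` on `X`. -/
def pfMarginal (p : X → ℝ) (q : Z → X → ℝ) (z : Z) : ℝ :=
  ∑ x, q z x * p x

lemma le_pfMarginal {c : ℝ} (hp0 : ∀ x, 0 ≤ p x) (hp1 : ∑ x, p x = 1) {z : Z}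
    (hq : ∀ x, c ≤ q z x) : c ≤ pfMarginal p q z :=
  calc c = ∑ x, c * p x := by rw [← Finset.mul_sum, hp1, mul_one]
    _ ≤ pfMarginal p q z :=
      Finset.sum_le_sum fun x _ => mul_le_mul_of_nonneg_right (hq x) (hp0 x)

lemma pfMarginal_sub_pfMarginal (p : X → ℝ) (q q' : Z → X → ℝ) (z : Z) :
    pfMarginal p q' z - pfMarginal p q z = ∑ x, p x * (q' z x - q z x) := by
  simp only [pfMarginal, ← Finset.sum_sub_distrib, mul_comm (p _), sub_mul]

lemma sq_pfMarginal_sub_le (hp0 : ∀ x, 0 ≤ p x) (hp1 : ∑ x, p x = 1)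
    (q q' : Z → X → ℝ) (z : Z) :
    (pfMarginal p q' z - pfMarginal p q z) ^ 2 ≤ ∑ x, p x * (q' z x - q z x) ^ 2 := by
  rw [pfMarginal_sub_pfMarginal]
  exact pow_arith_mean_le_arith_mean_pow_of_even _ _ _ (fun x _ => hp0 x) hp1 even_two

variable [Fintype Z]

/-- The privacy-funnel sub-objective `G(q) = (β - 1) H(m_q) + H_q(Z|X)`, as a function of an
arbitrary array `q z x = q(z|x)`, whose columns need not sum to one. -/
noncomputable def pfSubobjective (β : ℝ) (p : X → ℝ) (q : Z → X → ℝ) : ℝ :=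
  (β - 1) * (-∑ z, pfMarginal p q z * log (pfMarginal p q z))
    + (-∑ x, p x * ∑ z, q z x * log (q z x))

/-- The partial derivative of `pfSubobjective β p` at `q` in the coordinate `q z x`, given by its
closed formula, which is the derivative only where the entries of `q` and `m_q` are positive. -/
noncomputable def pfSubobjectiveGrad (β : ℝ) (p : X → ℝ) (q : Z → X → ℝ) (z : Z) (x : X) : ℝ :=
  -(p x) * ((β - 1) * (log (pfMarginal p q z) + 1) + (log (q z x) + 1))

lemma sum_pfSubobjectiveGrad_mul_sub (β : ℝ) (p : X → ℝ) (q q' : Z → X → ℝ) :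
    ∑ z, ∑ x, pfSubobjectiveGrad β p q z x * (q' z x - q z x) =
      -((β - 1) * ∑ z, (log (pfMarginal p q z) + 1) * (pfMarginal p q' z - pfMarginal p q z))
        - ∑ z, ∑ x, p x * ((log (q z x) + 1) * (q' z x - q z x)) := by
  simp only [pfMarginal_sub_pfMarginal, Finset.mul_sum, ← Finset.sum_neg_distrib,
    ← Finset.sum_sub_distrib]
  refine Finset.sum_congr rfl fun z _ => Finset.sum_congr rfl fun x _ => ?_
  rw [pfSubobjectiveGrad]
  ring

lemma pfSubobjective_add_grad_sub (β : ℝ) (p : X → ℝ) (q q' : Z → X → ℝ) :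
    pfSubobjective β p q + ∑ z, ∑ x, pfSubobjectiveGrad β p q z x * (q' z x - q z x)
        - pfSubobjective β p q' =
      (β - 1) * ∑ z, mulLogBregman (pfMarginal p q' z) (pfMarginal p q z)
        + ∑ z, ∑ x, p x * mulLogBregman (q' z x) (q z x) := by
  have entropy_comm (r : Z → X → ℝ) :
      ∑ x, p x * ∑ z, r z x * log (r z x) = ∑ z, ∑ x, p x * (r z x * log (r z x)) := by
    simp only [Finset.mul_sum]
    exact Finset.sum_comm
  rw [sum_pfSubobjectiveGrad_mul_sub]
  simp only [pfSubobjective, mulLogBregman, entropy_comm, mul_sub, Finset.sum_sub_distrib]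
  ring

variable {ε : ℝ}

lemma sum_mulLogBregman_pfMarginal_le (hε : 0 < ε) (hp0 : ∀ x, 0 ≤ p x) (hp1 : ∑ x, p x = 1)
    (hq : ∀ z x, ε ≤ q z x) (hq' : ∀ z x, 0 ≤ q' z x) :
    ∑ z, mulLogBregman (pfMarginal p q' z) (pfMarginal p q z) ≤
      (∑ z, ∑ x, p x * (q' z x - q z x) ^ 2) / ε := by
  rw [Finset.sum_div]
  refine Finset.sum_le_sum fun z _ => ?_
  calc mulLogBregman (pfMarginal p q' z) (pfMarginal p q z)
      ≤ (pfMarginal p q' z - pfMarginal p q z) ^ 2 / ε :=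
        mulLogBregman_le_sq_div_of_le hε (le_pfMarginal hp0 hp1 (hq' z))
          (le_pfMarginal hp0 hp1 (hq z))
    _ ≤ (∑ x, p x * (q' z x - q z x) ^ 2) / ε :=
        div_le_div_of_nonneg_right (sq_pfMarginal_sub_le hp0 hp1 q q' z) hε.le

lemma sum_mul_mulLogBregman_le (hε : 0 < ε) (hp0 : ∀ x, 0 ≤ p x)
    (hq : ∀ z x, ε ≤ q z x) (hq' : ∀ z x, 0 ≤ q' z x) :
    ∑ z, ∑ x, p x * mulLogBregman (q' z x) (q z x) ≤
      (∑ z, ∑ x, p x * (q' z x - q z x) ^ 2) / ε := by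
  simp only [Finset.sum_div, mul_div_assoc]
  exact Finset.sum_le_sum fun z _ => Finset.sum_le_sum fun x _ =>
    mul_le_mul_of_nonneg_left (mulLogBregman_le_sq_div_of_le hε (hq' z x) (hq z x)) (hp0 x)

lemma pfSubobjective_add_grad_sub_le (β : ℝ) (hε : 0 < ε) (hp0 : ∀ x, 0 ≤ p x)
    (hp1 : ∑ x, p x = 1) (hq : ∀ z x, ε ≤ q z x) (hq' : ∀ z x, 0 ≤ q' z x) :
    pfSubobjective β p q + ∑ z, ∑ x, pfSubobjectiveGrad β p q z x * (q' z x - q z x)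
        - pfSubobjective β p q' ≤
      max β 1 / ε * ∑ z, ∑ x, p x * (q' z x - q z x) ^ 2 := by
  rw [pfSubobjective_add_grad_sub]
  set D := ∑ z, mulLogBregman (pfMarginal p q' z) (pfMarginal p q z)
  set V := ∑ z, ∑ x, p x * (q' z x - q z x) ^ 2
  have hD0 : 0 ≤ D := Finset.sum_nonneg fun z _ =>
    mulLogBregman_nonneg (le_pfMarginal hp0 hp1 (hq' z))
      (hε.trans_le (le_pfMarginal hp0 hp1 (hq z)))
  have hDV : D ≤ V / ε := sum_mulLogBregman_pfMarginal_le hε hp0 hp1 hq hq'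
  have hβ : β - 1 ≤ max β 1 - 1 := sub_le_sub_right (le_max_left β 1) 1
  have hmax : 0 ≤ max β 1 - 1 := sub_nonneg.2 (le_max_right β 1)
  calc (β - 1) * D + ∑ z, ∑ x, p x * mulLogBregman (q' z x) (q z x)
      ≤ (max β 1 - 1) * (V / ε) + V / ε :=
        add_le_add (mul_le_mul hβ hDV hD0 hmax) (sum_mul_mulLogBregman_le hε hp0 hq hq')
    _ = max β 1 / ε * V := by ring

theorem pf_subobjective_weakly_convex_general (β : ℝ) (hε : 0 < ε) (hp0 : ∀ x, 0 ≤ p x)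
    (hp1 : ∑ x, p x = 1) (hq : ∀ z x, ε ≤ q z x) (hq' : ∀ z x, 0 ≤ q' z x) :
    pfSubobjective β p q' ≥
      pfSubobjective β p q + ∑ z, ∑ x, pfSubobjectiveGrad β p q z x * (q' z x - q z x)
        - max β 1 / ε * ∑ z, ∑ x, (q' z x - q z x) ^ 2 := by
  have hp_le (x : X) : p x ≤ 1 :=
    hp1 ▸ Finset.single_le_sum (fun y _ => hp0 y) (Finset.mem_univ x)
  have weighted_le : ∑ z, ∑ x, p x * (q' z x - q z x) ^ 2 ≤ ∑ z, ∑ x, (q' z x - q z x) ^ 2 :=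
    Finset.sum_le_sum fun z _ => Finset.sum_le_sum fun x _ =>
      mul_le_of_le_one_left (sq_nonneg _) (hp_le x)
  have hσ : 0 ≤ max β 1 / ε := div_nonneg (zero_le_one.trans (le_max_right β 1)) hε.le
  linarith [pfSubobjective_add_grad_sub_le β hε hp0 hp1 hq hq',
    mul_le_mul_of_nonneg_left weighted_le hσ]

end PrivacyFunnel

lemma max_one_div_le {m n : ℝ} (β : ℝ) {ε : ℝ} (hε : 0 < ε) (hm : 1 ≤ m) (hn : 1 ≤ n) :
    max β 1 / ε ≤ 2 * n * (|β - 1| + m) / ε / 2 :=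
  have hmax : max β 1 ≤ |β - 1| + m :=
    max_le (by linarith [le_abs_self (β - 1)]) (by linarith [abs_nonneg (β - 1)])
  calc max β 1 / ε ≤ n * (|β - 1| + m) / ε := by
        gcongr
        exact hmax.trans (le_mul_of_one_le_left (by positivity) hn)
    _ = 2 * n * (|β - 1| + m) / ε / 2 := by ring

/-- (Weak convexity of the privacy-funnel sub-objective.) Fix `β`,
`ε ∈ (0,1]`, finite nonempty sets `X, Z`, and a probability vector `p` on `X`. For a
conditional probability family `q`, let `m_q z := ∑ x, q z x * p x` be the induced
marginal on `Z`, and define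
`G(q) := (β - 1) * H(m_q) + H_q(Z|X)` where `H(m) := -∑ z, m z * log (m z)` and
`H_q(Z|X) := -∑ x, p x * ∑ z, q z x * log (q z x)`, with gradient entries
`(∇G q)_{z,x} = -(p x) * ((β - 1) * (log (m_q z) + 1) + (log (q z x) + 1))`.
Then for any two `ε`-infimal conditional families `q, q'`:
`G q' ≥ G q + ⟨∇G q, q' - q⟩ - (σ_G/2) * ‖q' - q‖₂²` with
`σ_G := 2 * N_z * (|β - 1| + N_x) / ε`, i.e. `G` is `σ_G`-weakly convex on the set of
`ε`-infimal conditional probability families. -/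
theorem pf_subobjective_weakly_convex {X Z : Type*}
    [Fintype X] [Nonempty X] [Fintype Z] [Nonempty Z]
    (β ε : ℝ) (hε0 : 0 < ε) (hε1 : ε ≤ 1)
    (p : X → ℝ) (hp0 : ∀ x, 0 ≤ p x) (hp1 : ∑ x, p x = 1)
    (q q' : Z → X → ℝ)
    (hqsum : ∀ x, ∑ z, q z x = 1) (hq'sum : ∀ x, ∑ z, q' z x = 1)
    (hqε : ∀ z x, ε ≤ q z x) (hq'ε : ∀ z x, ε ≤ q' z x) :
    (β - 1) * (-∑ z, (∑ x, q' z x * p x) * Real.log (∑ x, q' z x * p x))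
      + (-∑ x, p x * ∑ z, q' z x * Real.log (q' z x)) ≥
    (β - 1) * (-∑ z, (∑ x, q z x * p x) * Real.log (∑ x, q z x * p x))
      + (-∑ x, p x * ∑ z, q z x * Real.log (q z x))
      + (∑ z, ∑ x,
          (-(p x) * ((β - 1) * (Real.log (∑ x', q z x' * p x') + 1)
            + (Real.log (q z x) + 1))) * (q' z x - q z x))
      - ((2 * (Fintype.card Z : ℝ) * (|β - 1| + (Fintype.card X : ℝ)) / ε) / 2) *
          ∑ z, ∑ x, (q' z x - q z x) ^ 2 := by
  have hσ := max_one_div_le β hε0 (m := Fintype.card X) (n := Fintype.card Z)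
    (Nat.one_le_cast.2 Fintype.card_pos) (Nat.one_le_cast.2 Fintype.card_pos)
  exact (sub_le_sub_left (mul_le_mul_of_nonneg_right hσ (by positivity)) _).trans
    (pf_subobjective_weakly_convex_general β hε0 hp0 hp1 hqε fun z x => hε0.le.trans (hq'ε z x))
end

section
/- Let F be a differentiable convex function on ℝⁿ, let A and B be real matrices of compatible sizes, let c > 0, and let vectors p, p′, q, ν satisfy the first-order condition ∇F(p′) = −Aᵀ[ν + c(A p′ − B q)]. Then L_c(p, q, ν) − L_c(p′, q, ν) ≥ (c/2) ‖A p − A p′‖². -/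
open scoped RealInnerProductSpace

/-- The augmented Lagrangian
`L_c(p, q, ν) := F p + G q + ⟨ν, A p - B q⟩ + (c/2) ‖A p - B q‖²`. -/
noncomputable def augLag {E E₂ H : Type*}
    [NormedAddCommGroup E] [InnerProductSpace ℝ E]
    [NormedAddCommGroup E₂] [InnerProductSpace ℝ E₂]
    [NormedAddCommGroup H] [InnerProductSpace ℝ H]
    (F : E → ℝ) (G : E₂ → ℝ) (A : E →L[ℝ] H) (B : E₂ →L[ℝ] H) (c : ℝ)
    (p : E) (q : E₂) (ν : H) : ℝ :=
  F p + G q + ⟪ν, A p - B q⟫ + c / 2 * ‖A p - B q‖ ^ 2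

section

variable {E E₂ H : Type*}
  [NormedAddCommGroup E] [InnerProductSpace ℝ E]
  [NormedAddCommGroup E₂] [InnerProductSpace ℝ E₂]
  [NormedAddCommGroup H] [InnerProductSpace ℝ H]

/-- Taylor expansion at `v` of a quadratic function, whose gradient there is `ν + c • v`. -/
lemma inner_add_half_mul_norm_sq_eq (ν : H) (c : ℝ) (u v : H) :
    ⟪ν, u⟫ + c / 2 * ‖u‖ ^ 2 =
      ⟪ν, v⟫ + c / 2 * ‖v‖ ^ 2 + ⟪ν + c • v, u - v⟫ + c / 2 * ‖u - v‖ ^ 2 := by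
  obtain ⟨d, rfl⟩ : ∃ d, u = v + d := ⟨u - v, (add_sub_cancel v u).symm⟩
  rw [add_sub_cancel_left, norm_add_sq_real, inner_add_right, inner_add_left,
    real_inner_smul_left]
  ring

lemma augLag_sub_augLag (F : E → ℝ) (G : E₂ → ℝ) (A : E →L[ℝ] H) (B : E₂ →L[ℝ] H) (c : ℝ)
    (p p' : E) (q : E₂) (ν : H) :
    augLag F G A B c p q ν - augLag F G A B c p' q ν =
      F p - F p' + ⟪ν + c • (A p' - B q), A p - A p'⟫ + c / 2 * ‖A p - A p'‖ ^ 2 := by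
  have expansion := inner_add_half_mul_norm_sq_eq ν c (A p - B q) (A p' - B q)
  rw [sub_sub_sub_cancel_right] at expansion
  unfold augLag
  linarith

/-- Stationarity turns the terms preceding `c / 2 * ‖A p - A p'‖ ^ 2` in `augLag_sub_augLag` into
the Bregman gap `F p - F p' - ⟪g, p - p'⟫`, which is nonnegative since `g` is a subgradient. -/
theorem augLag_decrease_p_update_general
    (F : E → ℝ) (g p' : E) (hg : ∀ x, F p' + ⟪g, x - p'⟫ ≤ F x)
    (G : E₂ → ℝ) (A : E →L[ℝ] H) (At : H → E)
    (hAt : ∀ (x : E) (ξ : H), ⟪A x, ξ⟫ = ⟪x, At ξ⟫)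
    (B : E₂ →L[ℝ] H) (c : ℝ) (p : E) (q : E₂) (ν : H)
    (hmin : g = -At (ν + c • (A p' - B q))) :
    c / 2 * ‖A p - A p'‖ ^ 2 ≤ augLag F G A B c p q ν - augLag F G A B c p' q ν := by
  have inner_subgradient : ⟪g, p - p'⟫ = -⟪ν + c • (A p' - B q), A p - A p'⟫ := by
    rw [hmin, inner_neg_left, real_inner_comm, ← hAt, map_sub, real_inner_comm]
  rw [augLag_sub_augLag]
  linarith [hg p]

end

/-- Let `F` be a differentiable convex function, `A, B` matrices (linear
maps) of compatible sizes, `c > 0`, and suppose `p', q, ν` satisfy the first-order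
condition `∇F(p') = -Aᵀ (ν + c (A p' - B q))`. Then
`L_c(p, q, ν) - L_c(p', q, ν) ≥ (c/2) ‖A p - A p'‖²`. -/
theorem augLag_decrease_p_update {E E₂ H : Type*}
    [NormedAddCommGroup E] [InnerProductSpace ℝ E] [CompleteSpace E]
    [NormedAddCommGroup E₂] [InnerProductSpace ℝ E₂]
    [NormedAddCommGroup H] [InnerProductSpace ℝ H]
    (F : E → ℝ) (gradF : E → E) (hFdiff : ∀ x, HasGradientAt F (gradF x) x)
    (hFconv : ∀ x y, F y ≥ F x + ⟪gradF x, y - x⟫)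
    (G : E₂ → ℝ)
    (A : E →L[ℝ] H) (At : H →L[ℝ] E)
    (hAt : ∀ (x : E) (ξ : H), ⟪A x, ξ⟫ = ⟪x, At ξ⟫)
    (B : E₂ →L[ℝ] H)
    (c : ℝ) (hc : 0 < c) (p p' : E) (q : E₂) (ν : H)
    (hmin : gradF p' = -(At (ν + c • (A p' - B q)))) :
    augLag F G A B c p q ν - augLag F G A B c p' q ν ≥ c / 2 * ‖A p - A p'‖ ^ 2 :=
  augLag_decrease_p_update_general F (gradF p') p' (hFconv p') G A At hAt B c p q ν hmin
end

section
/- (Sufficient decrease for the first DRS scheme.) Let F: ℝⁿ → ℝ be differentiable, σ_F-strongly convex and L_p-smooth; let G be differentiable and ω_G-restricted weakly convex with respect to B; let A be an n×n symmetric positive definite matrix with smallest eigenvalue μ_A > 0; let c > 0 and 0 < α ≤ 2. Suppose the points p^k, p^{k+1}, q^k, q^{k+1}, ν^k, ν^{k+1}, ν_{1/2}^{k+1} satisfy the first-order optimality conditions of the first DRS scheme at step k, together with ∇F(p^k) = −Aᵀ ν^k. Then L_c(p^k, q^k, ν^k) − L_c(p^{k+1}, q^{k+1}, ν^{k+1})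 ≥ [σ_F/4 + c μ_A² (1/α − 1/2)] ‖p^k − p^{k+1}‖² + ((c − ω_G)/2) ‖B q^k − B q^{k+1}‖² + (σ_F μ_A²/(4 L_p²) − 1/(c α)) ‖ν^k − ν^{k+1}‖². -/
open scoped RealInnerProductSpace

/-!
Write `r = A p - B q` and `r' = A p' - B q` for the residuals before and after the `p`-update. The
step from `(p, q, ν)` to `(p', q', ν')` passes through `(p', q, ν')`. Replacing `q` by its
stationary point `q'` gains `((c - ω) / 2) ‖B q - B q'‖²`, since the penalty is a quadratic with
curvature `c` in `B q`. For the update of `(p, ν)`, stationarity `∇F p' = -Aᵀ ν'` and strong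
convexity leave the gain `(σ / 2) ‖p - p'‖² + ⟪ν - ν', r⟫ + (c / 2) (‖r‖² - ‖r'‖²)`, and the relaxed
dual update makes the last two terms an exact combination of `‖A p - A p'‖²` and `‖ν - ν'‖²`.
Finally `∇F p = -Aᵀ ν` and `∇F p' = -Aᵀ ν'` bound `‖ν - ν'‖` by a multiple of `‖p - p'‖`, so that
half of the strong convexity gain can be traded for a gain in `‖ν - ν'‖²`.
-/

section

variable {E E₂ H : Type*}
  [NormedAddCommGroup E] [InnerProductSpace ℝ E]
  [NormedAddCommGroup E₂] [InnerProductSpace ℝ E₂]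
  [NormedAddCommGroup H] [InnerProductSpace ℝ H]

theorem mul_norm_le_norm_of_mul_norm_sq_le_inner {μ : ℝ} {x y : H}
    (h : μ * ‖x‖ ^ 2 ≤ ⟪y, x⟫) : μ * ‖x‖ ≤ ‖y‖ := by
  rcases eq_or_ne x 0 with rfl | hx
  · simp
  · refine le_of_mul_le_mul_right ?_ (norm_pos_iff.2 hx)
    calc μ * ‖x‖ * ‖x‖ = μ * ‖x‖ ^ 2 := by ring
      _ ≤ ⟪y, x⟫ := h
      _ ≤ ‖y‖ * ‖x‖ := real_inner_le_norm y x

theorem sq_div_sq_mul_sq_le_sq {κ L a b : ℝ} (hκ : 0 ≤ κ) (hL : 0 < L) (ha : 0 ≤ a)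
    (h : κ * a ≤ L * b) : κ ^ 2 / L ^ 2 * a ^ 2 ≤ b ^ 2 := by
  rw [← div_pow, ← mul_pow]
  refine pow_le_pow_left₀ (by positivity) ?_ 2
  rwa [div_mul_eq_mul_div, div_le_iff₀' hL]

theorem inner_add_norm_sq_sub_eq_of_relaxed_dual_update {c α : ℝ} (hc : c ≠ 0) (hα : α ≠ 0)
    {r r' ν ν' : H} (hν : ν' = ν - ((1 - α) * c) • r + c • r') :
    ⟪ν - ν', r⟫ + c / 2 * (‖r‖ ^ 2 - ‖r'‖ ^ 2)
      = c * (1 / α - 1 / 2) * ‖r - r'‖ ^ 2 - 1 / (c * α) * ‖ν - ν'‖ ^ 2 := by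
  obtain ⟨d, rfl⟩ : ∃ d, r' = r - d := ⟨r - r', by abel⟩
  have hδ : ν - ν' = c • (d - α • r) := by rw [hν]; module
  have hinner : ⟪ν - ν', r⟫ = c * (⟪r, d⟫ - α * ‖r‖ ^ 2) := by
    rw [hδ, real_inner_smul_left, inner_sub_left, real_inner_smul_left,
      real_inner_self_eq_norm_sq, real_inner_comm]
  have hnorm : ‖ν - ν'‖ ^ 2 = c ^ 2 * (‖d‖ ^ 2 - 2 * α * ⟪r, d⟫ + α ^ 2 * ‖r‖ ^ 2) := by
    rw [hδ, norm_smul, mul_pow, norm_sub_sq_real, real_inner_smul_right, norm_smul, mul_pow,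
      Real.norm_eq_abs, Real.norm_eq_abs, sq_abs, sq_abs, real_inner_comm]
    ring
  rw [hinner, hnorm, sub_sub_cancel, norm_sub_sq_real]
  field_simp
  ring

theorem le_augLag_sub_of_stationary_right (F : E → ℝ) {G : E₂ → ℝ} (A : E →L[ℝ] H)
    {B : E₂ →L[ℝ] H} {Bt : H →L[ℝ] E₂} (hBt : ∀ x ξ, ⟪B x, ξ⟫ = ⟪x, Bt ξ⟫) {c ω : ℝ} {p : E}
    {q q' g : E₂} {ν : H}
    (hG : G q' + ⟪g, q - q'⟫ - ω / 2 * ‖B q - B q'‖ ^ 2 ≤ G q)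
    (hg : g = Bt (ν + c • (A p - B q'))) :
    (c - ω) / 2 * ‖B q - B q'‖ ^ 2 ≤ augLag F G A B c p q ν - augLag F G A B c p q' ν := by
  have hinner : ⟪g, q - q'⟫ = ⟪ν, B q - B q'⟫ + c * ⟪A p - B q', B q - B q'⟫ := by
    rw [hg, real_inner_comm, ← hBt, map_sub, real_inner_comm, inner_add_left,
      real_inner_smul_left]
  have hres : A p - B q = (A p - B q') - (B q - B q') := by abel
  have hquad := norm_sub_sq_real (A p - B q') (B q - B q')
  have hlin := inner_sub_right (𝕜 := ℝ) ν (A p - B q') (B q - B q')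
  rw [← hres] at hquad hlin
  simp only [augLag, hquad, hlin]
  linarith

theorem le_augLag_sub_of_stationary_left {F : E → ℝ} (G : E₂ → ℝ) {A : E →L[ℝ] H}
    {At : H →L[ℝ] E} (hAt : ∀ x ξ, ⟪A x, ξ⟫ = ⟪x, At ξ⟫) (B : E₂ →L[ℝ] H) (c : ℝ) {σ : ℝ}
    {p p' g : E} {q : E₂} (ν : H) {ν' : H}
    (hF : F p' + ⟪g, p - p'⟫ + σ / 2 * ‖p - p'‖ ^ 2 ≤ F p) (hg : g = -At ν') :
    σ / 2 * ‖p - p'‖ ^ 2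
        + (⟪ν - ν', A p - B q⟫ + c / 2 * (‖A p - B q‖ ^ 2 - ‖A p' - B q‖ ^ 2))
      ≤ augLag F G A B c p q ν - augLag F G A B c p' q ν' := by
  have hinner : ⟪g, p - p'⟫ = -⟪ν', A p - A p'⟫ := by
    rw [hg, inner_neg_left, real_inner_comm, ← hAt, map_sub, real_inner_comm]
  simp only [augLag, inner_sub_left, inner_sub_right] at hinner hF ⊢
  linarith

theorem le_augLag_sub_of_relaxed_update {F : E → ℝ} (G : E₂ → ℝ) {A : E →L[ℝ] H}
    {At : H →L[ℝ] E} (hAt : ∀ x ξ, ⟪A x, ξ⟫ = ⟪x, At ξ⟫) (B : E₂ →L[ℝ] H) {c α σ : ℝ}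
    (hc : c ≠ 0) (hα : α ≠ 0) {p p' g : E} {q : E₂} {ν ν' : H}
    (hF : F p' + ⟪g, p - p'⟫ + σ / 2 * ‖p - p'‖ ^ 2 ≤ F p) (hg : g = -At ν')
    (hν : ν' = ν - ((1 - α) * c) • (A p - B q) + c • (A p' - B q)) :
    σ / 2 * ‖p - p'‖ ^ 2 + c * (1 / α - 1 / 2) * ‖A (p - p')‖ ^ 2
        - 1 / (c * α) * ‖ν - ν'‖ ^ 2
      ≤ augLag F G A B c p q ν - augLag F G A B c p' q ν' := by
  have hgain := le_augLag_sub_of_stationary_left G hAt B c ν (q := q) hF hg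
  rwa [inner_add_norm_sq_sub_eq_of_relaxed_dual_update hc hα hν, sub_sub_sub_cancel_right,
    ← map_sub, ← add_sub_assoc] at hgain

-- `HasGradientAt` requires completeness, so the gradients are encoded as Fréchet derivatives.
theorem sufficient_decrease_first_drs_general
    (F : E → ℝ) (gradF : E → E) (hFdiff : ∀ x, HasFDerivAt F (innerSL ℝ (gradF x)) x)
    (σF Lp : ℝ) (hσF : 0 ≤ σF) (hLp : 0 < Lp)
    (hFsc : ∀ x y, F y ≥ F x + ⟪gradF x, y - x⟫ + σF / 2 * ‖y - x‖ ^ 2)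
    (hFsmooth : ∀ x y, ‖gradF x - gradF y‖ ≤ Lp * ‖x - y‖)
    (G : E₂ → ℝ) (gradG : E₂ → E₂) (hGdiff : ∀ x, HasFDerivAt G (innerSL ℝ (gradG x)) x)
    (ωG : ℝ)
    (B : E₂ →L[ℝ] H) (Bt : H →L[ℝ] E₂) (hBt : ∀ x ξ, ⟪B x, ξ⟫ = ⟪x, Bt ξ⟫)
    (hGrwc : ∀ x y, G y ≥ G x + ⟪gradG x, y - x⟫ - ωG / 2 * ‖B y - B x‖ ^ 2)
    (A : E →L[ℝ] H) (At : H →L[ℝ] E) (hAt : ∀ x ξ, ⟪A x, ξ⟫ = ⟪x, At ξ⟫)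
    (μ κ : ℝ) (hμ : 0 ≤ μ) (hκ : 0 ≤ κ)
    (hA : ∀ x, μ * ‖x‖ ≤ ‖A x‖) (hAtlb : ∀ ξ, κ * ‖ξ‖ ≤ ‖At ξ‖)
    (c α : ℝ) (hc : 0 < c) (hα0 : 0 < α) (hα2 : α ≤ 2)
    (pk pk1 : E) (qk qk1 : E₂) (νk νk1 νh : H)
    (hrelax : νh = νk - ((1 - α) * c) • (A pk - B qk))
    (hpmin : gradF pk1 = -At νk1)
    (hdual : νk1 = νh + c • (A pk1 - B qk))
    (hqmin : gradG qk1 = Bt (νk1 + c • (A pk1 - B qk1)))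
    (hprev : gradF pk = -At νk) :
    augLag F G A B c pk qk νk - augLag F G A B c pk1 qk1 νk1 ≥
      (σF / 4 + c * μ ^ 2 * (1 / α - 1 / 2)) * ‖pk - pk1‖ ^ 2
      + ((c - ωG) / 2) * ‖B qk - B qk1‖ ^ 2
      + (σF * κ ^ 2 / (4 * Lp ^ 2) - 1 / (c * α)) * ‖νk - νk1‖ ^ 2 := by
  have hgain_pν := le_augLag_sub_of_relaxed_update G hAt B hc.ne' hα0.ne' (hFsc pk1 pk) hpmin
    (hrelax ▸ hdual)
  have hgain_q := le_augLag_sub_of_stationary_right F A hBt (hGrwc qk1 qk) hqmin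
  have hprimal : c * (1 / α - 1 / 2) * (μ * ‖pk - pk1‖) ^ 2
      ≤ c * (1 / α - 1 / 2) * ‖A (pk - pk1)‖ ^ 2 := by
    have : 0 ≤ 1 / α - 1 / 2 := sub_nonneg.2 (one_div_le_one_div_of_le hα0 hα2)
    gcongr
    exact hA _
  have hdual_lip : κ * ‖νk - νk1‖ ≤ Lp * ‖pk - pk1‖ :=
    calc κ * ‖νk - νk1‖ ≤ ‖At (νk - νk1)‖ := hAtlb _
      _ = ‖gradF pk - gradF pk1‖ := by
        rw [hprev, hpmin, map_sub, neg_sub_neg, norm_sub_rev]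
      _ ≤ Lp * ‖pk - pk1‖ := hFsmooth pk pk1
  have htrade : σF / 4 * (κ ^ 2 / Lp ^ 2 * ‖νk - νk1‖ ^ 2) ≤ σF / 4 * ‖pk - pk1‖ ^ 2 := by
    gcongr
    exact sq_div_sq_mul_sq_le_sq hκ hLp (norm_nonneg _) hdual_lip
  have hcoeff : σF * κ ^ 2 / (4 * Lp ^ 2) = σF / 4 * (κ ^ 2 / Lp ^ 2) := by
    rw [div_mul_div_comm]
  rw [hcoeff]
  linarith

end

/-- (Sufficient decrease for the first DRS scheme.) Let `F` be
differentiable, `σ_F`-strongly convex and `L_p`-smooth; `G` differentiable and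
`ω_G`-restricted weakly convex w.r.t. `B`; `A` symmetric positive definite with smallest
eigenvalue `μ_A > 0`; `c > 0`, `0 < α ≤ 2`. If the points satisfy the first-order
optimality conditions of the first DRS scheme at step `k` together with
`∇F(pᵏ) = -Aᵀ νᵏ`, then
`L_c(pᵏ, qᵏ, νᵏ) - L_c(pᵏ⁺¹, qᵏ⁺¹, νᵏ⁺¹) ≥
  [σ_F/4 + c μ_A² (1/α - 1/2)] ‖pᵏ - pᵏ⁺¹‖² + ((c - ω_G)/2) ‖B qᵏ - B qᵏ⁺¹‖²
  + (σ_F μ_A²/(4 L_p²) - 1/(c α)) ‖νᵏ - νᵏ⁺¹‖²`. -/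
theorem sufficient_decrease_first_drs {E E₂ : Type*}
    [NormedAddCommGroup E] [InnerProductSpace ℝ E] [CompleteSpace E]
    [NormedAddCommGroup E₂] [InnerProductSpace ℝ E₂] [CompleteSpace E₂]
    (F : E → ℝ) (gradF : E → E) (hFdiff : ∀ x, HasGradientAt F (gradF x) x)
    (σF Lp : ℝ) (hσF : 0 < σF) (hLp : 0 < Lp)
    (hFsc : ∀ x y, F y ≥ F x + ⟪gradF x, y - x⟫ + σF / 2 * ‖y - x‖ ^ 2)
    (hFsmooth : ∀ x y, ‖gradF x - gradF y‖ ≤ Lp * ‖x - y‖)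
    (G : E₂ → ℝ) (gradG : E₂ → E₂) (hGdiff : ∀ x, HasGradientAt G (gradG x) x)
    (ωG : ℝ)
    (B : E₂ →L[ℝ] E) (Bt : E →L[ℝ] E₂)
    (hBt : ∀ (x : E₂) (ξ : E), ⟪B x, ξ⟫ = ⟪x, Bt ξ⟫)
    (hGrwc : ∀ x y, G y ≥ G x + ⟪gradG x, y - x⟫ - ωG / 2 * ‖B y - B x‖ ^ 2)
    (A : E →L[ℝ] E) (hAsym : ∀ x y, ⟪A x, y⟫ = ⟪x, A y⟫)
    (μA : ℝ) (hμA : 0 < μA) (hAlb : ∀ x, μA * ‖x‖ ^ 2 ≤ ⟪A x, x⟫)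
    (c α : ℝ) (hc : 0 < c) (hα0 : 0 < α) (hα2 : α ≤ 2)
    (pk pk1 : E) (qk qk1 : E₂) (νk νk1 νh : E)
    (hrelax : νh = νk - ((1 - α) * c) • (A pk - B qk))
    (hpmin : gradF pk1 = -(A νk1))
    (hdual : νk1 = νh + c • (A pk1 - B qk))
    (hqmin : gradG qk1 = Bt (νk1 + c • (A pk1 - B qk1)))
    (hprev : gradF pk = -(A νk)) :
    augLag F G A B c pk qk νk - augLag F G A B c pk1 qk1 νk1 ≥
      (σF / 4 + c * μA ^ 2 * (1 / α - 1 / 2)) * ‖pk - pk1‖ ^ 2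
      + ((c - ωG) / 2) * ‖B qk - B qk1‖ ^ 2
      + (σF * μA ^ 2 / (4 * Lp ^ 2) - 1 / (c * α)) * ‖νk - νk1‖ ^ 2 := by
  have hA x : μA * ‖x‖ ≤ ‖A x‖ := mul_norm_le_norm_of_mul_norm_sq_le_inner (hAlb x)
  exact sufficient_decrease_first_drs_general F gradF hFdiff σF Lp hσF.le hLp hFsc hFsmooth
    G gradG hGdiff ωG B Bt hBt hGrwc A A hAsym μA μA hμA.le hμA.le hA hA c α hc hα0 hα2
    pk pk1 qk qk1 νk νk1 νh hrelax hpmin hdual hqmin hprev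
end

section
/- (Sufficient decrease for the second DRS scheme.) Let F be differentiable and convex, let G be differentiable and σ_G-weakly convex, let A and B be real matrices of compatible sizes, and let c > 0, α > 0. Suppose the points p^k, p^{k+1}, q^k, q^{k+1}, ν^k, ν^{k+1}, ν_{1/2}^{k+1} satisfy the first-order optimality conditions of the second DRS scheme at step k. Then L_c(p^k, q^k, ν^k) − L_c(p^{k+1}, q^{k+1}, ν^{k+1}) ≥ (c/2) ‖A p^k − A p^{k+1}‖² − (σ_G/2) ‖q^k − q^{k+1}‖² + c(1/α − 1/2) ‖B q^k − B q^{k+1}‖² − (1/(α c)) ‖ν^k − ν^{k+1}‖². -/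
open scoped RealInnerProductSpace

/-!
Pass from `(pᵏ, qᵏ, νᵏ)` to `(pᵏ⁺¹, qᵏ, νᵏ)` and then to `(pᵏ⁺¹, qᵏ⁺¹, νᵏ⁺¹)`. In `p` the penalty
is an exact quadratic, so the optimality condition cancels the first-order term and leaves
`(c/2) ‖A pᵏ - A pᵏ⁺¹‖²`. For the second passage put `u = A pᵏ⁺¹ - B qᵏ` and `d = B qᵏ - B qᵏ⁺¹`;
the two dual half steps combine to `νᵏ⁺¹ - νᵏ = αc u + c d`. The condition `∇G(qᵏ⁺¹) = Bᵀ νᵏ⁺¹`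
absorbs the change of `G`, and what remains is `-⟨νᵏ⁺¹ - νᵏ, u⟩ + (c/2)(‖u‖² - ‖u + d‖²)`.
Expressing it through `‖d‖²` and `‖νᵏ⁺¹ - νᵏ‖²` alone means completing a square in `u`, which is
where the factors `1/α` come from.
-/

section SecondDRS

variable {E E₂ H : Type*}
  [NormedAddCommGroup E] [InnerProductSpace ℝ E]
  [NormedAddCommGroup E₂] [InnerProductSpace ℝ E₂]
  [NormedAddCommGroup H] [InnerProductSpace ℝ H]

/-- The vector `s` is a global `σ`-weak subgradient of `F` at `x`, the nonsmooth substitute for the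
gradient of a `σ`-weakly convex function. The sign of `σ` is free: `σ = 0` is the subgradient of
convex analysis, and `σ < 0` gives the subgradient inequality of strong convexity. -/
def HasWeakSubgradientAt (σ : ℝ) (F : E → ℝ) (s x : E) : Prop :=
  ∀ y, F x + ⟪s, y - x⟫ - σ / 2 * ‖y - x‖ ^ 2 ≤ F y

theorem hasWeakSubgradientAt_zero_iff {F : E → ℝ} {s x : E} :
    HasWeakSubgradientAt 0 F s x ↔ ∀ y, F x + ⟪s, y - x⟫ ≤ F y := by
  simp [HasWeakSubgradientAt]

theorem HasWeakSubgradientAt.add_inner_map_sub_le {σ : ℝ} {F : E → ℝ} {A : E →L[ℝ] H}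
    {At : H →L[ℝ] E} (hAt : ∀ (x : E) (ξ : H), ⟪A x, ξ⟫ = ⟪x, At ξ⟫) {ξ : H} {x : E}
    (hF : HasWeakSubgradientAt σ F (At ξ) x) (y : E) :
    F x + ⟪ξ, A y - A x⟫ - σ / 2 * ‖y - x‖ ^ 2 ≤ F y := by
  have h_adjoint : ⟪At ξ, y - x⟫ = ⟪ξ, A y - A x⟫ := by
    rw [real_inner_comm, ← hAt, map_sub, real_inner_comm]
  rw [← h_adjoint]
  exact hF y

theorem neg_inner_add_half_mul_norm_sq_sub_norm_add_sq {c α : ℝ} (hc : c ≠ 0) (hα : α ≠ 0)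
    (u d : H) :
    -⟪(α * c) • u + c • d, u⟫ + c / 2 * (‖u‖ ^ 2 - ‖u + d‖ ^ 2) =
      c * (1 / α - 1 / 2) * ‖d‖ ^ 2 - 1 / (α * c) * ‖(α * c) • u + c • d‖ ^ 2 := by
  simp only [← real_inner_self_eq_norm_sq, inner_add_left, inner_add_right,
    real_inner_smul_left, real_inner_smul_right, real_inner_comm u d]
  field_simp
  ring

section AugmentedLagrangian

variable {F : E → ℝ} {G : E₂ → ℝ} {A : E →L[ℝ] H} {B : E₂ →L[ℝ] H} {c : ℝ}

theorem augLag_sub_augLag_left (p p' : E) (q : E₂) (ν : H) :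
    augLag F G A B c p q ν - augLag F G A B c p' q ν =
      F p - F p' + ⟪ν + c • (A p' - B q), A p - A p'⟫ + c / 2 * ‖A p - A p'‖ ^ 2 := by
  have h_residual : A p - B q = (A p' - B q) + (A p - A p') := by abel
  simp only [augLag]
  rw [h_residual, norm_add_sq_real, inner_add_right, inner_add_left, real_inner_smul_left]
  ring

theorem augLag_sub_augLag_right_dual (p : E) (q q' : E₂) (ν ν' : H) :
    augLag F G A B c p q ν - augLag F G A B c p q' ν' =
      G q - G q' - ⟪ν', B q - B q'⟫ - ⟪ν' - ν, A p - B q⟫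
        + c / 2 * (‖A p - B q‖ ^ 2 - ‖A p - B q'‖ ^ 2) := by
  have h_inner : ⟪ν', A p - B q'⟫ = ⟪ν', A p - B q⟫ + ⟪ν', B q - B q'⟫ := by
    rw [← inner_add_right, sub_add_sub_cancel]
  simp only [augLag]
  rw [h_inner, inner_sub_left]
  ring

theorem augLag_left_decrease {σ : ℝ} {At : H →L[ℝ] E}
    (hAt : ∀ (x : E) (ξ : H), ⟪A x, ξ⟫ = ⟪x, At ξ⟫) (p : E) {p' : E} {q : E₂} {ν : H}
    (hF : HasWeakSubgradientAt σ F (-(At (ν + c • (A p' - B q)))) p') :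
    c / 2 * ‖A p - A p'‖ ^ 2 - σ / 2 * ‖p - p'‖ ^ 2 ≤
      augLag F G A B c p q ν - augLag F G A B c p' q ν := by
  rw [← map_neg] at hF
  have h_subgradient := hF.add_inner_map_sub_le hAt p
  rw [inner_neg_left] at h_subgradient
  rw [augLag_sub_augLag_left]
  linarith

theorem augLag_right_dual_decrease {σ α : ℝ} {Bt : H →L[ℝ] E₂}
    (hBt : ∀ (x : E₂) (ξ : H), ⟪B x, ξ⟫ = ⟪x, Bt ξ⟫) (hc : c ≠ 0) (hα : α ≠ 0)
    {p : E} {q q' : E₂} {ν ν' : H} (hG : HasWeakSubgradientAt σ G (Bt ν') q')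
    (hν : ν' - ν = (α * c) • (A p - B q) + c • (B q - B q')) :
    c * (1 / α - 1 / 2) * ‖B q - B q'‖ ^ 2 - σ / 2 * ‖q - q'‖ ^ 2
        - 1 / (α * c) * ‖ν - ν'‖ ^ 2 ≤
      augLag F G A B c p q ν - augLag F G A B c p q' ν' := by
  have h_subgradient := hG.add_inner_map_sub_le hBt q
  have h_square :=
    neg_inner_add_half_mul_norm_sq_sub_norm_add_sq hc hα (A p - B q) (B q - B q')
  rw [← hν, sub_add_sub_cancel, norm_sub_rev ν' ν] at h_square
  rw [augLag_sub_augLag_right_dual]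
  linarith

end AugmentedLagrangian

theorem sufficient_decrease_second_drs_general
    {F : E → ℝ} {G : E₂ → ℝ} {σF σG : ℝ}
    {A : E →L[ℝ] H} {At : H →L[ℝ] E} (hAt : ∀ (x : E) (ξ : H), ⟪A x, ξ⟫ = ⟪x, At ξ⟫)
    {B : E₂ →L[ℝ] H} {Bt : H →L[ℝ] E₂} (hBt : ∀ (x : E₂) (ξ : H), ⟪B x, ξ⟫ = ⟪x, Bt ξ⟫)
    {c α : ℝ} (hc : c ≠ 0) (hα : α ≠ 0)
    (pk : E) {pk1 : E} {qk qk1 : E₂} {νk νk1 νh : H}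
    (hpmin : HasWeakSubgradientAt σF F (-(At (νk + c • (A pk1 - B qk)))) pk1)
    (hrelax : νh = νk - ((1 - α) * c) • (A pk1 - B qk))
    (hqmin : HasWeakSubgradientAt σG G (Bt νk1) qk1)
    (hdual : νk1 = νh + c • (A pk1 - B qk1)) :
    augLag F G A B c pk qk νk - augLag F G A B c pk1 qk1 νk1 ≥
      c / 2 * ‖A pk - A pk1‖ ^ 2 - σF / 2 * ‖pk - pk1‖ ^ 2 - σG / 2 * ‖qk - qk1‖ ^ 2
      + c * (1 / α - 1 / 2) * ‖B qk - B qk1‖ ^ 2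
      - (1 / (α * c)) * ‖νk - νk1‖ ^ 2 := by
  have h_dual_step : νk1 - νk = (α * c) • (A pk1 - B qk) + c • (B qk - B qk1) := by
    rw [hdual, hrelax]
    module
  have h_left := augLag_left_decrease (G := G) hAt pk hpmin
  have h_right := augLag_right_dual_decrease (F := F) hBt hc hα hqmin h_dual_step
  linarith

end SecondDRS

/-- (Sufficient decrease for the second DRS scheme.) Let `F` be
differentiable and convex, `G` differentiable and `σ_G`-weakly convex, `A, B` matrices
(linear maps) of compatible sizes, `c > 0`, `α > 0`. If the points satisfy the
first-order optimality conditions of the second DRS scheme at step `k`, then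
`L_c(pᵏ, qᵏ, νᵏ) - L_c(pᵏ⁺¹, qᵏ⁺¹, νᵏ⁺¹) ≥
  (c/2) ‖A pᵏ - A pᵏ⁺¹‖² - (σ_G/2) ‖qᵏ - qᵏ⁺¹‖²
  + c (1/α - 1/2) ‖B qᵏ - B qᵏ⁺¹‖² - (1/(α c)) ‖νᵏ - νᵏ⁺¹‖²`. -/
theorem sufficient_decrease_second_drs {E E₂ H : Type*}
    [NormedAddCommGroup E] [InnerProductSpace ℝ E] [CompleteSpace E]
    [NormedAddCommGroup E₂] [InnerProductSpace ℝ E₂] [CompleteSpace E₂]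
    [NormedAddCommGroup H] [InnerProductSpace ℝ H]
    (F : E → ℝ) (gradF : E → E) (hFdiff : ∀ x, HasGradientAt F (gradF x) x)
    (hFconv : ∀ x y, F y ≥ F x + ⟪gradF x, y - x⟫)
    (G : E₂ → ℝ) (gradG : E₂ → E₂) (hGdiff : ∀ x, HasGradientAt G (gradG x) x)
    (σG : ℝ)
    (hGwc : ∀ x y, G y ≥ G x + ⟪gradG x, y - x⟫ - σG / 2 * ‖y - x‖ ^ 2)
    (A : E →L[ℝ] H) (At : H →L[ℝ] E)
    (hAt : ∀ (x : E) (ξ : H), ⟪A x, ξ⟫ = ⟪x, At ξ⟫)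
    (B : E₂ →L[ℝ] H) (Bt : H →L[ℝ] E₂)
    (hBt : ∀ (x : E₂) (ξ : H), ⟪B x, ξ⟫ = ⟪x, Bt ξ⟫)
    (c α : ℝ) (hc : 0 < c) (hα : 0 < α)
    (pk pk1 : E) (qk qk1 : E₂) (νk νk1 νh : H)
    (hpmin : gradF pk1 = -(At (νk + c • (A pk1 - B qk))))
    (hrelax : νh = νk - ((1 - α) * c) • (A pk1 - B qk))
    (hqmin : gradG qk1 = Bt νk1)
    (hdual : νk1 = νh + c • (A pk1 - B qk1)) :
    augLag F G A B c pk qk νk - augLag F G A B c pk1 qk1 νk1 ≥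
      c / 2 * ‖A pk - A pk1‖ ^ 2 - σG / 2 * ‖qk - qk1‖ ^ 2
      + c * (1 / α - 1 / 2) * ‖B qk - B qk1‖ ^ 2
      - (1 / (α * c)) * ‖νk - νk1‖ ^ 2 := by
  have hF := hasWeakSubgradientAt_zero_iff.2 (hFconv pk1)
  have hG : HasWeakSubgradientAt σG G (gradG qk1) qk1 := hGwc qk1
  simpa only [zero_div, zero_mul, sub_zero] using
    sufficient_decrease_second_drs_general (σF := 0)
      hAt hBt hc.ne' hα.ne' pk (hpmin ▸ hF) hrelax (hqmin ▸ hG) hdual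
end

section
/- (Sufficient decrease for the second DRS scheme under a sub-minimization-path bound.) Let F be differentiable and convex; let G be differentiable, σ_G-weakly convex and L_q-smooth; let A be symmetric positive definite with smallest eigenvalue μ_A > 0; let B have full row rank, and let μ_{BBᵀ} > 0 be the smallest eigenvalue of B Bᵀ; let c > 0, 0 < α ≤ 2 and M_q > 0. Suppose the points p^k, p^{k+1}, q^k, q^{k+1}, ν^k, ν^{k+1}, ν_{1/2}^{k+1} satisfy the first-order optimality conditions of the second DRS scheme at step k, that additionally ∇G(q^k) = Bᵀ ν^k, and that ‖q^k − q^{k+1}‖ ≤ M_q ‖B q^k − B q^{k+1}‖. Then L_c(p^k, q^k, ν^k) − L_c(p^{k+1}, q^{k+1}, ν^{k+1}) ≥ (c μ_A²/2) ‖p^k − p^{k+1}‖² + [ (c/M_q²)(1/α − 1/2) − σ_G/2 − L_q²/(α c μ_{BBᵀ}) ] ‖q^k − q^{k+1}‖². -/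
open scoped RealInnerProductSpace

/-!
Primes mark the iterates of step `k + 1`. Write `r = A p' - B q` and `d = B q - B q'`. Since `p'`
minimizes over `p` at fixed `(q, ν)`, the `p`-update decreases the augmented Lagrangian by at least
`c / 2 * ‖A (p - p')‖ ^ 2`, up to the weak convexity error of `F`. Eliminating the intermediate
multiplier gives `ν' - ν = (α * c) • r + c • d`. With `Bᵀ ν'` as subgradient of `G` at `q'`, the
change caused by the `q`- and `ν`-updates is, up to the weak convexity error of `G`, a quadratic
form in `(r, d)`; completing the square turns it into
`c * (1 / α - 1 / 2) * ‖d‖ ^ 2 - ‖ν' - ν‖ ^ 2 / (α * c)`. The sub-minimization-path bound controls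
the first term from below. As `Bᵀ ν` and `Bᵀ ν'` are gradients of `G`, smoothness of `G` and
coercivity of `B Bᵀ` control the second one from above.
-/

/-- `g` is a proximal subgradient of `f` at `x` with constant `σ`: the one-point form of
`σ`-weak convexity, without differentiability. For `σ = 0` this is a convex subgradient. -/
def HasProximalSubgradientAt {V : Type*} [NormedAddCommGroup V] [InnerProductSpace ℝ V]
    (σ : ℝ) (f : V → ℝ) (g x : V) : Prop :=
  ∀ y, f x + ⟪g, y - x⟫ - σ / 2 * ‖y - x‖ ^ 2 ≤ f y

theorem mul_norm_le_norm_of_mul_sq_le_inner {V : Type*} [NormedAddCommGroup V]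
    [InnerProductSpace ℝ V] {μ : ℝ} {x y : V} (h : μ * ‖x‖ ^ 2 ≤ ⟪y, x⟫) : μ * ‖x‖ ≤ ‖y‖ := by
  rcases (norm_nonneg x).eq_or_lt with hx | hx
  · simp [← hx]
  · refine le_of_mul_le_mul_right ?_ hx
    calc μ * ‖x‖ * ‖x‖ = μ * ‖x‖ ^ 2 := by ring
      _ ≤ ⟪y, x⟫ := h
      _ ≤ ‖y‖ * ‖x‖ := real_inner_le_norm y x

section

variable {E E₂ H : Type*}
  [NormedAddCommGroup E] [InnerProductSpace ℝ E]
  [NormedAddCommGroup E₂] [InnerProductSpace ℝ E₂]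
  [NormedAddCommGroup H] [InnerProductSpace ℝ H]
  {F : E → ℝ} {G : E₂ → ℝ} {A : E →L[ℝ] H} {B : E₂ →L[ℝ] H}
  {At : H →L[ℝ] E} {Bt : H →L[ℝ] E₂} {σF σG c α : ℝ} {p p' : E} {q q' : E₂} {ν ν' : H}

theorem le_augLag_sub_augLag_of_p_update (hAt : ∀ x ξ, ⟪A x, ξ⟫ = ⟪x, At ξ⟫)
    (hp : HasProximalSubgradientAt σF F (-At (ν + c • (A p' - B q))) p') :
    c / 2 * ‖A (p - p')‖ ^ 2 - σF / 2 * ‖p - p'‖ ^ 2 ≤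
      augLag F G A B c p q ν - augLag F G A B c p' q ν := by
  have hF : F p' - ⟪ν + c • (A p' - B q), A (p - p')⟫ - σF / 2 * ‖p - p'‖ ^ 2 ≤ F p := by
    rw [real_inner_comm, hAt]
    simpa only [inner_neg_left, real_inner_comm, ← sub_eq_add_neg] using hp p
  have hres : A p - B q = (A p' - B q) + A (p - p') := by rw [map_sub]; abel
  rw [augLag, augLag, hres, norm_add_sq_real, inner_add_right]
  rw [inner_add_left, real_inner_smul_left] at hF
  linarith

theorem norm_sq_smul_add_smul_div (hc : c ≠ 0) (hα : α ≠ 0) (r d : H) :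
    ‖(α * c) • r + c • d‖ ^ 2 / (α * c) =
      α * c * ‖r‖ ^ 2 + 2 * c * ⟪r, d⟫ + c / α * ‖d‖ ^ 2 := by
  simp only [norm_add_sq_real, norm_smul, real_inner_smul_left, real_inner_smul_right, mul_pow,
    Real.norm_eq_abs, sq_abs]
  field_simp

theorem le_augLag_sub_augLag_of_q_dual_update
    (hc : c ≠ 0) (hα : α ≠ 0) (hBt : ∀ x ξ, ⟪B x, ξ⟫ = ⟪x, Bt ξ⟫)
    (hq : HasProximalSubgradientAt σG G (Bt ν') q')
    (hν : ν' = ν + (α * c) • (A p - B q) + c • (B q - B q')) :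
    c * (1 / α - 1 / 2) * ‖B (q - q')‖ ^ 2 - σG / 2 * ‖q - q'‖ ^ 2 - ‖ν' - ν‖ ^ 2 / (α * c) ≤
      augLag F G A B c p q ν - augLag F G A B c p q' ν' := by
  have hG : G q' + ⟪ν', B (q - q')⟫ - σG / 2 * ‖q - q'‖ ^ 2 ≤ G q := by
    rw [real_inner_comm, hBt, real_inner_comm]
    exact hq q
  rw [← map_sub] at hν
  have hres : A p - B q' = (A p - B q) + B (q - q') := by rw [map_sub]; abel
  rw [augLag, augLag, hres]
  generalize A p - B q = r at hν ⊢
  generalize B (q - q') = d at hν hG ⊢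
  have hdiff : ν' - ν = (α * c) • r + c • d := by rw [hν]; abel
  have hinner : ⟪ν', r⟫ - ⟪ν, r⟫ = α * c * ‖r‖ ^ 2 + c * ⟪r, d⟫ := by
    rw [← inner_sub_left, hdiff, inner_add_left, real_inner_smul_left, real_inner_smul_left,
      real_inner_self_eq_norm_sq, real_inner_comm]
  rw [hdiff, norm_sq_smul_add_smul_div hc hα, norm_add_sq_real, inner_add_right]
  linear_combination hG + hinner

theorem sufficient_decrease_second_drs_subminpath_general {L M μA μB : ℝ}
    (hc : 0 < c) (hα0 : 0 < α) (hα2 : α ≤ 2) (hM : 0 < M)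
    (hAt : ∀ x ξ, ⟪A x, ξ⟫ = ⟪x, At ξ⟫)
    (hBt : ∀ x ξ, ⟪B x, ξ⟫ = ⟪x, Bt ξ⟫)
    (hμA : 0 ≤ μA) (hA : ∀ x, μA * ‖x‖ ≤ ‖A x‖)
    (hμB : 0 < μB) (hB : ∀ ξ, μB * ‖ξ‖ ^ 2 ≤ ‖Bt ξ‖ ^ 2)
    (hp : HasProximalSubgradientAt σF F (-At (ν + c • (A p' - B q))) p')
    (hq : HasProximalSubgradientAt σG G (Bt ν') q')
    (hν : ν' = ν + (α * c) • (A p' - B q) + c • (B q - B q'))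
    (hL : ‖Bt ν - Bt ν'‖ ≤ L * ‖q - q'‖)
    (hsubmin : ‖q - q'‖ ≤ M * ‖B (q - q')‖) :
    (c * μA ^ 2 / 2 - σF / 2) * ‖p - p'‖ ^ 2
      + (c / M ^ 2 * (1 / α - 1 / 2) - σG / 2 - L ^ 2 / (α * c * μB)) * ‖q - q'‖ ^ 2 ≤
      augLag F G A B c p q ν - augLag F G A B c p' q' ν' := by
  have hprimal : c / 2 * (μA * ‖p - p'‖) ^ 2 ≤ c / 2 * ‖A (p - p')‖ ^ 2 := by
    gcongr
    exact hA _
  have hcoeff : 0 ≤ 1 / α - 1 / 2 := sub_nonneg.2 (one_div_le_one_div_of_le hα0 hα2)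
  have hpath : c * (1 / α - 1 / 2) * (‖q - q'‖ / M) ^ 2 ≤
      c * (1 / α - 1 / 2) * ‖B (q - q')‖ ^ 2 := by
    gcongr
    exact (div_le_iff₀' hM).2 hsubmin
  have hmult : μB * ‖ν' - ν‖ ^ 2 ≤ (L * ‖q - q'‖) ^ 2 := by
    refine (hB _).trans ?_
    rw [map_sub, norm_sub_rev]
    gcongr
  have hdual : ‖ν' - ν‖ ^ 2 / (α * c) ≤ (L * ‖q - q'‖) ^ 2 / μB / (α * c) := by
    gcongr
    exact (le_div_iff₀' hμB).2 hmult
  have hpstep := le_augLag_sub_augLag_of_p_update (G := G) (p := p) hAt hp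
  have hqstep := le_augLag_sub_augLag_of_q_dual_update (F := F) hc.ne' hα0.ne' hBt hq hν
  calc
    _ = c / 2 * (μA * ‖p - p'‖) ^ 2 - σF / 2 * ‖p - p'‖ ^ 2
          + (c * (1 / α - 1 / 2) * (‖q - q'‖ / M) ^ 2 - σG / 2 * ‖q - q'‖ ^ 2
            - (L * ‖q - q'‖) ^ 2 / μB / (α * c)) := by ring
    _ ≤ _ := by linarith

end

/-- (Sufficient decrease for the second DRS scheme under a
sub-minimization-path bound.) Let `F` be differentiable and convex; `G` differentiable,
`σ_G`-weakly convex and `L_q`-smooth; `A` symmetric positive definite with smallest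
eigenvalue `μ_A > 0`; `B` of full row rank with `μ_{BBᵀ} > 0` the smallest eigenvalue of
`B Bᵀ`; `c > 0`, `0 < α ≤ 2`, `M_q > 0`. If the points satisfy the first-order optimality
conditions of the second DRS scheme at step `k`, together with `∇G(qᵏ) = Bᵀ νᵏ` and
`‖qᵏ - qᵏ⁺¹‖ ≤ M_q ‖B qᵏ - B qᵏ⁺¹‖`, then
`L_c(pᵏ, qᵏ, νᵏ) - L_c(pᵏ⁺¹, qᵏ⁺¹, νᵏ⁺¹) ≥ (c μ_A²/2) ‖pᵏ - pᵏ⁺¹‖²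
  + [(c/M_q²)(1/α - 1/2) - σ_G/2 - L_q²/(α c μ_{BBᵀ})] ‖qᵏ - qᵏ⁺¹‖²`. -/
theorem sufficient_decrease_second_drs_subminpath {E E₂ : Type*}
    [NormedAddCommGroup E] [InnerProductSpace ℝ E] [CompleteSpace E]
    [NormedAddCommGroup E₂] [InnerProductSpace ℝ E₂] [CompleteSpace E₂]
    (F : E → ℝ) (gradF : E → E) (hFdiff : ∀ x, HasGradientAt F (gradF x) x)
    (hFconv : ∀ x y, F y ≥ F x + ⟪gradF x, y - x⟫)
    (G : E₂ → ℝ) (gradG : E₂ → E₂) (hGdiff : ∀ x, HasGradientAt G (gradG x) x)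
    (σG Lq : ℝ)
    (hGwc : ∀ x y, G y ≥ G x + ⟪gradG x, y - x⟫ - σG / 2 * ‖y - x‖ ^ 2)
    (hGsmooth : ∀ x y, ‖gradG x - gradG y‖ ≤ Lq * ‖x - y‖)
    (A : E →L[ℝ] E) (hAsym : ∀ x y, ⟪A x, y⟫ = ⟪x, A y⟫)
    (μA : ℝ) (hμA : 0 < μA) (hAlb : ∀ x, μA * ‖x‖ ^ 2 ≤ ⟪A x, x⟫)
    (B : E₂ →L[ℝ] E) (Bt : E →L[ℝ] E₂)
    (hBt : ∀ (x : E₂) (ξ : E), ⟪B x, ξ⟫ = ⟪x, Bt ξ⟫)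
    (hBsurj : Function.Surjective B)
    (μBBt : ℝ) (hμBBt : 0 < μBBt)
    (hBBtlb : ∀ ξ : E, μBBt * ‖ξ‖ ^ 2 ≤ ⟪B (Bt ξ), ξ⟫)
    (c α Mq : ℝ) (hc : 0 < c) (hα0 : 0 < α) (hα2 : α ≤ 2) (hMq : 0 < Mq)
    (pk pk1 : E) (qk qk1 : E₂) (νk νk1 νh : E)
    (hpmin : gradF pk1 = -(A (νk + c • (A pk1 - B qk))))
    (hrelax : νh = νk - ((1 - α) * c) • (A pk1 - B qk))
    (hqmin : gradG qk1 = Bt νk1)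
    (hdual : νk1 = νh + c • (A pk1 - B qk1))
    (hprev : gradG qk = Bt νk)
    (hsubmin : ‖qk - qk1‖ ≤ Mq * ‖B qk - B qk1‖) :
    augLag F G A B c pk qk νk - augLag F G A B c pk1 qk1 νk1 ≥
      (c * μA ^ 2 / 2) * ‖pk - pk1‖ ^ 2
      + ((c / Mq ^ 2) * (1 / α - 1 / 2) - σG / 2 - Lq ^ 2 / (α * c * μBBt)) *
          ‖qk - qk1‖ ^ 2 := by
  have hBlb (ξ : E) : μBBt * ‖ξ‖ ^ 2 ≤ ‖Bt ξ‖ ^ 2 := by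
    simpa only [hBt, real_inner_self_eq_norm_sq] using hBBtlb ξ
  have hp : HasProximalSubgradientAt 0 F (-A (νk + c • (A pk1 - B qk))) pk1 := fun y ↦ by
    simpa only [← hpmin, zero_div, zero_mul, sub_zero] using hFconv pk1 y
  have hq : HasProximalSubgradientAt σG G (Bt νk1) qk1 := by
    rw [← hqmin]
    exact hGwc qk1
  have hν : νk1 = νk + (α * c) • (A pk1 - B qk) + c • (B qk - B qk1) := by
    rw [hdual, hrelax]
    module
  have hL : ‖Bt νk - Bt νk1‖ ≤ Lq * ‖qk - qk1‖ := by
    simpa only [hprev, hqmin] using hGsmooth qk qk1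
  simpa only [ge_iff_le, zero_div, sub_zero] using
    sufficient_decrease_second_drs_subminpath_general (p := pk) hc hα0 hα2 hMq hAsym hBt hμA.le
      (fun x ↦ mul_norm_le_norm_of_mul_sq_le_inner (hAlb x)) hμBBt hBlb hp hq hν hL
      (by rwa [map_sub])
end

section
/- Let F be differentiable and convex; let G be differentiable, σ_G-weakly convex and L_q-smooth; let c > 0 and α > 0. Let (p*, q*, ν*) satisfy A p* = B q*, and suppose the iterates p^{k+1}, q^k, q^{k+1}, ν^k, ν^{k+1}, ν_{1/2}^{k+1} satisfy the first-order optimality conditions of the second DRS scheme at step k. Then: (i) L_c(p^{k+1}, q^{k+1}, ν^{k+1}) − L_c(p*, q*, ν*) ≤ c ‖A p^{k+1} − B q^{k+1}‖² + (σ_G/2) ‖q^{k+1} − q*‖² − (c/2) ‖B q^{k+1} − B q*‖² + (c(2 − α)/2) ‖B q^k − B q*‖² − (c(2 − α)/2) ‖A p^{k+1} − B q^k‖² + (c(α − 1)/2) ‖A p^{k+1} − A p*‖². (ii) If additionally ∇G(q^k) = Bᵀ ν^k and A Aᵀ is positive definite with smallest eigenvalue μ_{AAᵀ} > 0, then ‖∇L_c(p^{k+1},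 q^{k+1}, ν^{k+1})‖² ≥ μ_{AAᵀ} [ ‖ν^k − ν^{k+1}‖² + c² ‖B q^k − B q^{k+1}‖² − 2 c L_q ‖q^k − q^{k+1}‖² ]. -/
open scoped RealInnerProductSpace

/-!
Put `ξ = ν + c (A p⁺ - B q)`, so that stationarity reads `∇F(p⁺) = -Aᵀ ξ` and `∇G(q⁺) = Bᵀ ν⁺`.
Testing convexity of `F` and weak convexity of `G` against a feasible point `(p*, q*)`, all
multiplier terms collapse into `⟨ν⁺ - ξ, A p⁺ - A p*⟩`. The dual updates make `ν⁺ - ξ` a combination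
of the residuals `A p⁺ - B q⁺` and `A p⁺ - B q`, and polarization turns both inner products into
squared norms.

For the gradient, the `p`-component alone suffices: it equals `Aᵀ (ν⁺ - ν + c (B q - B q⁺))`, and
the cross term in the square of its argument is `2 c ⟨∇G(q⁺) - ∇G(q), q - q⁺⟩`, which smoothness
of `G` controls.
-/

section InnerProduct

variable {E H : Type*} [NormedAddCommGroup E] [InnerProductSpace ℝ E]
  [NormedAddCommGroup H] [InnerProductSpace ℝ H]

theorem real_inner_sub_sub_eq_norm_sq (x y z : E) :
    ⟪x - y, x - z⟫ = (‖x - y‖ ^ 2 + ‖x - z‖ ^ 2 - ‖y - z‖ ^ 2) / 2 := by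
  have h := norm_sub_sq_real (x - y) (x - z)
  rw [sub_sub_sub_cancel_left, norm_sub_rev z y] at h
  linarith

theorem neg_mul_norm_sq_le_real_inner_of_norm_le {L : ℝ} {u v : E} (h : ‖u‖ ≤ L * ‖v‖) :
    -(L * ‖v‖ ^ 2) ≤ ⟪u, v⟫ := by
  have hprod : ‖u‖ * ‖v‖ ≤ L * ‖v‖ ^ 2 := by
    calc ‖u‖ * ‖v‖ ≤ L * ‖v‖ * ‖v‖ := by gcongr
      _ = L * ‖v‖ ^ 2 := by ring
  exact (neg_le_neg hprod).trans (neg_le_of_abs_le (abs_real_inner_le_norm u v))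

theorem le_norm_add_smul_sq_of_neg_le_real_inner {c K : ℝ} {u v : E} (hc : 0 ≤ c)
    (h : -K ≤ ⟪u, v⟫) :
    ‖u‖ ^ 2 + c ^ 2 * ‖v‖ ^ 2 - 2 * c * K ≤ ‖u + c • v‖ ^ 2 := by
  rw [norm_add_sq_real, real_inner_smul_right, norm_smul, mul_pow, Real.norm_eq_abs, sq_abs]
  linarith [mul_le_mul_of_nonneg_left h hc]

theorem real_inner_apply_left_of_adjoint {T : E → H} {Tt : H → E}
    (hT : ∀ x ξ, ⟪T x, ξ⟫ = ⟪x, Tt ξ⟫) (ξ : H) (x : E) : ⟪Tt ξ, x⟫ = ⟪ξ, T x⟫ := by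
  rw [real_inner_comm, ← hT, real_inner_comm]

end InnerProduct

section AugLag

variable {E E₂ H : Type*} [NormedAddCommGroup E] [InnerProductSpace ℝ E]
  [NormedAddCommGroup E₂] [InnerProductSpace ℝ E₂]
  [NormedAddCommGroup H] [InnerProductSpace ℝ H]
  {F : E → ℝ} {G : E₂ → ℝ} {A : E →L[ℝ] H} {At : H →L[ℝ] E} {B : E₂ →L[ℝ] H} {Bt : H →L[ℝ] E₂}

theorem augLag_of_apply_eq {p : E} {q : E₂} (h : A p = B q) (c : ℝ) (ν : H) :
    augLag F G A B c p q ν = F p + G q := by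
  simp [augLag, h]

theorem augLag_sub_le_of_weak_subgradient (hAt : ∀ x ξ, ⟪A x, ξ⟫ = ⟪x, At ξ⟫)
    (hBt : ∀ x ξ, ⟪B x, ξ⟫ = ⟪x, Bt ξ⟫) {σ : ℝ} {p p' : E} {q q' : E₂} {ξ ν : H}
    (hfeas : A p' = B q') (hF : F p + ⟪-At ξ, p' - p⟫ ≤ F p')
    (hG : G q + ⟪Bt ν, q' - q⟫ - σ / 2 * ‖q' - q‖ ^ 2 ≤ G q') (c : ℝ) (ν' : H) :
    augLag F G A B c p q ν - augLag F G A B c p' q' ν' ≤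
      ⟪ν - ξ, A p - A p'⟫ + c / 2 * ‖A p - B q‖ ^ 2 + σ / 2 * ‖q - q'‖ ^ 2 := by
  rw [inner_neg_left, real_inner_apply_left_of_adjoint hAt, map_sub] at hF
  rw [real_inner_apply_left_of_adjoint hBt, map_sub, ← hfeas, norm_sub_rev] at hG
  rw [augLag_of_apply_eq hfeas, augLag]
  simp only [inner_sub_left, inner_sub_right] at hF hG ⊢
  linarith

theorem augLag_sub_le_of_drs_step (hAt : ∀ x ξ, ⟪A x, ξ⟫ = ⟪x, At ξ⟫)
    (hBt : ∀ x ξ, ⟪B x, ξ⟫ = ⟪x, Bt ξ⟫) {c α σ : ℝ} {p p' : E} {q q₁ q' : E₂} {ν ν₁ : H}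
    (hfeas : A p' = B q') (hF : F p + ⟪-At (ν + c • (A p - B q)), p' - p⟫ ≤ F p')
    (hG : G q₁ + ⟪Bt ν₁, q' - q₁⟫ - σ / 2 * ‖q' - q₁‖ ^ 2 ≤ G q')
    (hν₁ : ν₁ = ν - ((1 - α) * c) • (A p - B q) + c • (A p - B q₁)) (ν' : H) :
    augLag F G A B c p q₁ ν₁ - augLag F G A B c p' q' ν' ≤
      c * ‖A p - B q₁‖ ^ 2 + σ / 2 * ‖q₁ - q'‖ ^ 2 - c / 2 * ‖B q₁ - B q'‖ ^ 2
        + c * (2 - α) / 2 * ‖B q - B q'‖ ^ 2 - c * (2 - α) / 2 * ‖A p - B q‖ ^ 2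
        + c * (α - 1) / 2 * ‖A p - A p'‖ ^ 2 := by
  have hgap := augLag_sub_le_of_weak_subgradient hAt hBt hfeas hF hG c ν'
  have hmult : ν₁ - (ν + c • (A p - B q)) =
      c • (A p - B q₁) - ((2 - α) * c) • (A p - B q) := by
    rw [hν₁]
    module
  rw [hmult, inner_sub_left, real_inner_smul_left, real_inner_smul_left,
    real_inner_sub_sub_eq_norm_sq, real_inner_sub_sub_eq_norm_sq] at hgap
  rw [← hfeas]
  linarith

theorem mul_le_norm_augLag_grad_fst_sq (hAt : ∀ x ξ, ⟪A x, ξ⟫ = ⟪x, At ξ⟫)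
    (hBt : ∀ x ξ, ⟪B x, ξ⟫ = ⟪x, Bt ξ⟫) {c L μ : ℝ} (hc : 0 ≤ c) (hμ : 0 ≤ μ)
    (hcoer : ∀ ξ, μ * ‖ξ‖ ^ 2 ≤ ⟪A (At ξ), ξ⟫) {p g : E} {q q₁ : E₂} {ν ν₁ : H}
    (hg : g = -At (ν + c • (A p - B q))) (hL : ‖Bt ν₁ - Bt ν‖ ≤ L * ‖q - q₁‖) :
    μ * (‖ν - ν₁‖ ^ 2 + c ^ 2 * ‖B q - B q₁‖ ^ 2 - 2 * c * L * ‖q - q₁‖ ^ 2) ≤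
      ‖g + At (ν₁ + c • (A p - B q₁))‖ ^ 2 := by
  have hgrad : g + At (ν₁ + c • (A p - B q₁)) = At ((ν₁ - ν) + c • (B q - B q₁)) := by
    rw [hg, ← map_neg, ← map_add]
    congr 1
    module
  have hcross : -(L * ‖q - q₁‖ ^ 2) ≤ ⟪ν₁ - ν, B q - B q₁⟫ := by
    rw [← map_sub B, ← real_inner_apply_left_of_adjoint hBt, map_sub]
    exact neg_mul_norm_sq_le_real_inner_of_norm_le hL
  calc μ * (‖ν - ν₁‖ ^ 2 + c ^ 2 * ‖B q - B q₁‖ ^ 2 - 2 * c * L * ‖q - q₁‖ ^ 2)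
      ≤ μ * ‖(ν₁ - ν) + c • (B q - B q₁)‖ ^ 2 := by
        rw [norm_sub_rev ν, mul_assoc (2 * c)]
        gcongr
        exact le_norm_add_smul_sq_of_neg_le_real_inner hc hcross
    _ ≤ ‖At ((ν₁ - ν) + c • (B q - B q₁))‖ ^ 2 := by
        rw [← real_inner_self_eq_norm_sq (At _), ← hAt]
        exact hcoer _
    _ = ‖g + At (ν₁ + c • (A p - B q₁))‖ ^ 2 := by rw [hgrad]

end AugLag

/-- Let `F` be differentiable and convex; `G` differentiable,
`σ_G`-weakly convex and `L_q`-smooth; `c > 0`, `α > 0`. Let `(p*, q*, ν*)` satisfy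
`A p* = B q*` and suppose the iterates satisfy the first-order optimality conditions of
the second DRS scheme at step `k`. Then
(i) the stated upper bound on `L_c(pᵏ⁺¹, qᵏ⁺¹, νᵏ⁺¹) - L_c(p*, q*, ν*)` holds, and
(ii) if additionally `∇G(qᵏ) = Bᵀ νᵏ` and `A Aᵀ` is positive definite with smallest
eigenvalue `μ_{AAᵀ} > 0`, then
`‖∇L_c(pᵏ⁺¹, qᵏ⁺¹, νᵏ⁺¹)‖² ≥ μ_{AAᵀ} [‖νᵏ - νᵏ⁺¹‖² + c² ‖B qᵏ - B qᵏ⁺¹‖²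
  - 2 c L_q ‖qᵏ - qᵏ⁺¹‖²]`, where the full gradient of `L_c` in `(p, q, ν)` has
components `∇F(p) + Aᵀ[ν + c (A p - B q)]`, `∇G(q) - Bᵀ[ν + c (A p - B q)]`, and
`A p - B q`. -/
theorem augLag_value_gap_and_gradient_bound_second {E E₂ H : Type*}
    [NormedAddCommGroup E] [InnerProductSpace ℝ E] [CompleteSpace E]
    [NormedAddCommGroup E₂] [InnerProductSpace ℝ E₂] [CompleteSpace E₂]
    [NormedAddCommGroup H] [InnerProductSpace ℝ H]
    (F : E → ℝ) (gradF : E → E) (hFdiff : ∀ x, HasGradientAt F (gradF x) x)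
    (hFconv : ∀ x y, F y ≥ F x + ⟪gradF x, y - x⟫)
    (G : E₂ → ℝ) (gradG : E₂ → E₂) (hGdiff : ∀ x, HasGradientAt G (gradG x) x)
    (σG Lq : ℝ)
    (hGwc : ∀ x y, G y ≥ G x + ⟪gradG x, y - x⟫ - σG / 2 * ‖y - x‖ ^ 2)
    (hGsmooth : ∀ x y, ‖gradG x - gradG y‖ ≤ Lq * ‖x - y‖)
    (A : E →L[ℝ] H) (At : H →L[ℝ] E)
    (hAt : ∀ (x : E) (ξ : H), ⟪A x, ξ⟫ = ⟪x, At ξ⟫)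
    (B : E₂ →L[ℝ] H) (Bt : H →L[ℝ] E₂)
    (hBt : ∀ (x : E₂) (ξ : H), ⟪B x, ξ⟫ = ⟪x, Bt ξ⟫)
    (c α : ℝ) (hc : 0 < c) (hα : 0 < α)
    (pstar : E) (qstar : E₂) (νstar : H)
    (hsta : A pstar = B qstar)
    (pk1 : E) (qk qk1 : E₂) (νk νk1 νh : H)
    (hpmin : gradF pk1 = -(At (νk + c • (A pk1 - B qk))))
    (hrelax : νh = νk - ((1 - α) * c) • (A pk1 - B qk))
    (hqmin : gradG qk1 = Bt νk1)
    (hdual : νk1 = νh + c • (A pk1 - B qk1)) :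
    (augLag F G A B c pk1 qk1 νk1 - augLag F G A B c pstar qstar νstar ≤
        c * ‖A pk1 - B qk1‖ ^ 2 + (σG / 2) * ‖qk1 - qstar‖ ^ 2
        - (c / 2) * ‖B qk1 - B qstar‖ ^ 2
        + (c * (2 - α) / 2) * ‖B qk - B qstar‖ ^ 2
        - (c * (2 - α) / 2) * ‖A pk1 - B qk‖ ^ 2
        + (c * (α - 1) / 2) * ‖A pk1 - A pstar‖ ^ 2) ∧
    (∀ μAAt : ℝ, 0 < μAAt →
      (∀ ξ : H, μAAt * ‖ξ‖ ^ 2 ≤ ⟪A (At ξ), ξ⟫) →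
      gradG qk = Bt νk →
      ‖gradF pk1 + At (νk1 + c • (A pk1 - B qk1))‖ ^ 2
        + ‖gradG qk1 - Bt (νk1 + c • (A pk1 - B qk1))‖ ^ 2
        + ‖A pk1 - B qk1‖ ^ 2 ≥
      μAAt * (‖νk - νk1‖ ^ 2 + c ^ 2 * ‖B qk - B qk1‖ ^ 2
        - 2 * c * Lq * ‖qk - qk1‖ ^ 2)) := by
  constructor
  · refine augLag_sub_le_of_drs_step hAt hBt hsta ?_ ?_ (hdual.trans (by rw [hrelax])) νstar
    · rw [← hpmin]
      exact hFconv pk1 pstar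
    · rw [← hqmin]
      exact hGwc qk1 qstar
  · intro μ hμ hcoer hqk
    have hLip : ‖Bt νk1 - Bt νk‖ ≤ Lq * ‖qk - qk1‖ := by
      rw [← hqmin, ← hqk, norm_sub_rev qk]
      exact hGsmooth qk1 qk
    have hgrad_fst := mul_le_norm_augLag_grad_fst_sq hAt hBt hc.le hμ.le hcoer hpmin hLip
    linarith [sq_nonneg ‖gradG qk1 - Bt (νk1 + c • (A pk1 - B qk1))‖,
      sq_nonneg ‖A pk1 - B qk1‖]
end

section
/- (Kurdyka–Łojasiewicz property with exponent 1/2 for the first DRS scheme.) Let F be differentiable and σ_F-strongly convex; let G be differentiable and ω_G-restricted weakly convex with respect to B; let A be symmetric positive definite with largest eigenvalue λ_A; and let c ≥ ω_G. Let (p*, q*, ν*) be a stationary triple: A p* = B q*, ∇F(p*) = −Aᵀ ν*, ∇G(q*) = Bᵀ ν*. Then for every ε > 0 and η > 0, setting C := (ε/η) · sqrt(max{0, (c λ_A² − σ_F)/2}), the following holds: for every triple (p′, q′, ν′) satisfying ∇F(p′) = −Aᵀ ν′ and ∇G(q′) = Bᵀ[ν′ + c(A p′ − B q′)], with ‖p′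 − p*‖ ≤ ε, L_c(p′, q′, ν′) ≥ L_c(p*, q*, ν*), and ‖∇L_c(p′, q′, ν′)‖ ≥ η, one has (L_c(p′, q′, ν′) − L_c(p*, q*, ν*))^{1/2} ≤ C ‖∇L_c(p′, q′, ν′)‖. -/
open scoped RealInnerProductSpace

/-!
At a stationary triple the constraint `A p = B q` holds. Test strong convexity of `F` and
restricted weak convexity of `G` at `(p', q')` against this point. Because of the two optimality
conditions, the linear terms recombine with `(c/2) ‖A p' - B q'‖²` into the square
`(c/2) ‖A (p* - p')‖²`, while the `B`-terms leave `-((c - ω_G)/2) ‖B (q* - q')‖² ≤ 0`. Hence the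
Lagrangian gap is at most `((c λ_A² - σ_F)/2) ‖p* - p'‖²`, which is bounded on the `ε`-ball, and
the lower bound `η` on the gradient norm turns this constant bound into a multiple of that norm.
-/

section

variable {E E₂ H : Type*}
  [NormedAddCommGroup E] [InnerProductSpace ℝ E]
  [NormedAddCommGroup E₂] [InnerProductSpace ℝ E₂]
  [NormedAddCommGroup H] [InnerProductSpace ℝ H]
  {F : E → ℝ} {G : E₂ → ℝ} {A : E →L[ℝ] H} {B : E₂ →L[ℝ] H} {c σ ω l : ℝ}
  {p₀ p : E} {q₀ q : E₂} {ν₀ ν : H}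

theorem augLag_of_map_eq (h : A p = B q) : augLag F G A B c p q ν = F p + G q := by
  simp [augLag, h]

theorem augLag_sub_augLag_le (h₀ : A p₀ = B q₀)
    (hF : F p - ⟪ν, A (p₀ - p)⟫ + σ / 2 * ‖p₀ - p‖ ^ 2 ≤ F p₀)
    (hG : G q + ⟪ν + c • (A p - B q), B (q₀ - q)⟫ - ω / 2 * ‖B (q₀ - q)‖ ^ 2 ≤ G q₀) :
    augLag F G A B c p q ν - augLag F G A B c p₀ q₀ ν₀ ≤
      c / 2 * ‖A (p₀ - p)‖ ^ 2 - (c - ω) / 2 * ‖B (q₀ - q)‖ ^ 2 - σ / 2 * ‖p₀ - p‖ ^ 2 := by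
  have hA : A (p₀ - p) = B (q₀ - q) - (A p - B q) := by
    rw [map_sub, map_sub, h₀]
    abel
  have hsq : ‖A (p₀ - p)‖ ^ 2 =
      ‖B (q₀ - q)‖ ^ 2 - 2 * ⟪A p - B q, B (q₀ - q)⟫ + ‖A p - B q‖ ^ 2 := by
    rw [hA, norm_sub_sq_real, real_inner_comm]
  rw [hA, inner_sub_right] at hF
  rw [inner_add_left, real_inner_smul_left] at hG
  rw [augLag_of_map_eq h₀, augLag, hsq]
  linarith

theorem augLag_sub_augLag_le_mul_sq (h₀ : A p₀ = B q₀)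
    (hF : F p - ⟪ν, A (p₀ - p)⟫ + σ / 2 * ‖p₀ - p‖ ^ 2 ≤ F p₀)
    (hG : G q + ⟪ν + c • (A p - B q), B (q₀ - q)⟫ - ω / 2 * ‖B (q₀ - q)‖ ^ 2 ≤ G q₀)
    (hc : 0 ≤ c) (hω : ω ≤ c) (hA : ‖A (p₀ - p)‖ ≤ l * ‖p₀ - p‖) :
    augLag F G A B c p q ν - augLag F G A B c p₀ q₀ ν₀ ≤
      (c * l ^ 2 - σ) / 2 * ‖p₀ - p‖ ^ 2 := by
  have hB : 0 ≤ (c - ω) / 2 * ‖B (q₀ - q)‖ ^ 2 :=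
    mul_nonneg (by linarith) (sq_nonneg _)
  calc
    _ ≤ c / 2 * ‖A (p₀ - p)‖ ^ 2 - (c - ω) / 2 * ‖B (q₀ - q)‖ ^ 2 - σ / 2 * ‖p₀ - p‖ ^ 2 :=
      augLag_sub_augLag_le h₀ hF hG
    _ ≤ c / 2 * ‖A (p₀ - p)‖ ^ 2 - σ / 2 * ‖p₀ - p‖ ^ 2 := by linarith
    _ ≤ c / 2 * (l * ‖p₀ - p‖) ^ 2 - σ / 2 * ‖p₀ - p‖ ^ 2 := by gcongr
    _ = (c * l ^ 2 - σ) / 2 * ‖p₀ - p‖ ^ 2 := by ring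

end

theorem sqrt_le_mul_sqrt_max_zero {x m d : ℝ} (hd : 0 ≤ d) (h : x ≤ m * d ^ 2) :
    √x ≤ d * √(max 0 m) := by
  calc
    √x ≤ √(d ^ 2 * max 0 m) := by
      gcongr
      rw [mul_comm]
      exact h.trans (by gcongr; exact le_max_right 0 m)
    _ = d * √(max 0 m) := by rw [Real.sqrt_mul (sq_nonneg d), Real.sqrt_sq hd]

theorem kl_exponent_half_first_drs_general {E E₂ H : Type*}
    [NormedAddCommGroup E] [InnerProductSpace ℝ E] [CompleteSpace E]
    [NormedAddCommGroup E₂] [InnerProductSpace ℝ E₂] [CompleteSpace E₂]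
    [NormedAddCommGroup H] [InnerProductSpace ℝ H]
    {F : E → ℝ} {gradF : E → E} (_hF : ∀ x, HasGradientAt F (gradF x) x) {σ : ℝ}
    (hFsc : ∀ x y, F y ≥ F x + ⟪gradF x, y - x⟫ + σ / 2 * ‖y - x‖ ^ 2)
    {G : E₂ → ℝ} {gradG : E₂ → E₂} (_hG : ∀ x, HasGradientAt G (gradG x) x) {ω : ℝ}
    {A : E →L[ℝ] H} {At : H →L[ℝ] E} (hAt : ∀ x ξ, ⟪A x, ξ⟫ = ⟪x, At ξ⟫)
    {B : E₂ →L[ℝ] H} {Bt : H →L[ℝ] E₂} (hBt : ∀ x ξ, ⟪B x, ξ⟫ = ⟪x, Bt ξ⟫)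
    (hGrwc : ∀ x y, G y ≥ G x + ⟪gradG x, y - x⟫ - ω / 2 * ‖B y - B x‖ ^ 2)
    {l : ℝ} (hA : ∀ x, ‖A x‖ ≤ l * ‖x‖) {c : ℝ} (hc : 0 ≤ c) (hω : ω ≤ c)
    {p₀ p : E} {q₀ q : E₂} {ν₀ ν : H} (h₀ : A p₀ = B q₀)
    (hp : gradF p = -At ν) (hq : gradG q = Bt (ν + c • (A p - B q)))
    {ε η : ℝ} (hη : 0 < η) (hpε : ‖p - p₀‖ ≤ ε)
    (_hL : augLag F G A B c p₀ q₀ ν₀ ≤ augLag F G A B c p q ν)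
    (hgrad : η ≤ √(‖gradF p + At (ν + c • (A p - B q))‖ ^ 2
      + ‖gradG q - Bt (ν + c • (A p - B q))‖ ^ 2 + ‖A p - B q‖ ^ 2)) :
    √(augLag F G A B c p q ν - augLag F G A B c p₀ q₀ ν₀) ≤
      ε / η * √(max 0 ((c * l ^ 2 - σ) / 2)) *
        √(‖gradF p + At (ν + c • (A p - B q))‖ ^ 2
          + ‖gradG q - Bt (ν + c • (A p - B q))‖ ^ 2 + ‖A p - B q‖ ^ 2) := by
  have hFp : F p - ⟪ν, A (p₀ - p)⟫ + σ / 2 * ‖p₀ - p‖ ^ 2 ≤ F p₀ := by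
    have h := hFsc p p₀
    rwa [hp, inner_neg_left, real_inner_comm, ← hAt, real_inner_comm, ← sub_eq_add_neg] at h
  have hGq : G q + ⟪ν + c • (A p - B q), B (q₀ - q)⟫ - ω / 2 * ‖B (q₀ - q)‖ ^ 2 ≤ G q₀ := by
    have h := hGrwc q q₀
    rwa [hq, real_inner_comm, ← hBt, real_inner_comm, ← map_sub] at h
  have hgap := augLag_sub_augLag_le_mul_sq (ν₀ := ν₀) h₀ hFp hGq hc hω (hA _)
  rw [norm_sub_rev] at hpε
  set M := √(max 0 ((c * l ^ 2 - σ) / 2))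
  set N := √(‖gradF p + At (ν + c • (A p - B q))‖ ^ 2
    + ‖gradG q - Bt (ν + c • (A p - B q))‖ ^ 2 + ‖A p - B q‖ ^ 2)
  have hε : 0 ≤ ε := (norm_nonneg _).trans hpε
  calc
    _ ≤ ‖p₀ - p‖ * M := sqrt_le_mul_sqrt_max_zero (norm_nonneg _) hgap
    _ ≤ ε * M := by gcongr
    _ ≤ ε * M * (N / η) := le_mul_of_one_le_right (by positivity) ((one_le_div hη).2 hgrad)
    _ = ε / η * M * N := by ring

/-- (Kurdyka–Łojasiewicz property with exponent `1/2` for the first DRS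
scheme.) Let `F` be differentiable and `σ_F`-strongly convex; `G` differentiable and
`ω_G`-restricted weakly convex w.r.t. `B`; `A` symmetric positive definite with largest
eigenvalue `λ_A`; `c ≥ ω_G`. Let `(p*, q*, ν*)` be stationary. Then for every `ε > 0`
and `η > 0`, with `C := (ε/η) √(max 0 ((c λ_A² - σ_F)/2))`, every triple `(p', q', ν')`
satisfying `∇F(p') = -Aᵀ ν'` and `∇G(q') = Bᵀ[ν' + c (A p' - B q')]`, with
`‖p' - p*‖ ≤ ε`, `L_c(p', q', ν') ≥ L_c(p*, q*, ν*)` and `‖∇L_c(p', q', ν')‖ ≥ η`,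
satisfies `(L_c(p', q', ν') - L_c(p*, q*, ν*))^{1/2} ≤ C ‖∇L_c(p', q', ν')‖`. Here the
squared norm of the full gradient `∇L_c` is the sum of the squared norms of its three
components `∇F(p') + Aᵀ[ν' + c(A p' - B q')]`, `∇G(q') - Bᵀ[ν' + c(A p' - B q')]`, and
`A p' - B q'`. -/
theorem kl_exponent_half_first_drs {E E₂ : Type*}
    [NormedAddCommGroup E] [InnerProductSpace ℝ E] [CompleteSpace E]
    [NormedAddCommGroup E₂] [InnerProductSpace ℝ E₂] [CompleteSpace E₂]
    (F : E → ℝ) (gradF : E → E) (hFdiff : ∀ x, HasGradientAt F (gradF x) x)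
    (σF : ℝ) (hσF : 0 < σF)
    (hFsc : ∀ x y, F y ≥ F x + ⟪gradF x, y - x⟫ + σF / 2 * ‖y - x‖ ^ 2)
    (G : E₂ → ℝ) (gradG : E₂ → E₂) (hGdiff : ∀ x, HasGradientAt G (gradG x) x)
    (ωG : ℝ)
    (B : E₂ →L[ℝ] E) (Bt : E →L[ℝ] E₂)
    (hBt : ∀ (x : E₂) (ξ : E), ⟪B x, ξ⟫ = ⟪x, Bt ξ⟫)
    (hGrwc : ∀ x y, G y ≥ G x + ⟪gradG x, y - x⟫ - ωG / 2 * ‖B y - B x‖ ^ 2)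
    (A : E →L[ℝ] E) (hAsym : ∀ x y, ⟪A x, y⟫ = ⟪x, A y⟫)
    (μA lamA : ℝ) (hμA : 0 < μA)
    (hAlb : ∀ x, μA * ‖x‖ ^ 2 ≤ ⟪A x, x⟫) (hAub : ∀ x, ‖A x‖ ≤ lamA * ‖x‖)
    (c : ℝ) (hc : 0 < c) (hcω : ωG ≤ c)
    (pstar : E) (qstar : E₂) (νstar : E)
    (hsta1 : A pstar = B qstar)
    (hsta2 : gradF pstar = -(A νstar))
    (hsta3 : gradG qstar = Bt νstar)
    (ε η : ℝ) (hε : 0 < ε) (hη : 0 < η) :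
    ∀ (p' : E) (q' : E₂) (ν' : E),
      gradF p' = -(A ν') →
      gradG q' = Bt (ν' + c • (A p' - B q')) →
      ‖p' - pstar‖ ≤ ε →
      augLag F G A B c pstar qstar νstar ≤ augLag F G A B c p' q' ν' →
      η ≤ Real.sqrt (‖gradF p' + A (ν' + c • (A p' - B q'))‖ ^ 2
            + ‖gradG q' - Bt (ν' + c • (A p' - B q'))‖ ^ 2
            + ‖A p' - B q'‖ ^ 2) →
      Real.sqrt (augLag F G A B c p' q' ν' - augLag F G A B c pstar qstar νstar) ≤
        ((ε / η) * Real.sqrt (max 0 ((c * lamA ^ 2 - σF) / 2))) *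
          Real.sqrt (‖gradF p' + A (ν' + c • (A p' - B q'))‖ ^ 2
            + ‖gradG q' - Bt (ν' + c • (A p' - B q'))‖ ^ 2
            + ‖A p' - B q'‖ ^ 2) := by
  exact fun _ _ _ hp hq hpε hL hgrad ↦ kl_exponent_half_first_drs_general hFdiff hFsc hGdiff
    hAsym hBt hGrwc hAub hc.le hcω hsta1 hp hq hη hpε hL hgrad
end

section
/- (Kurdyka–Łojasiewicz property with exponent 1/2 for the second DRS scheme.) Let F be differentiable and convex; let G be differentiable, σ_G-weakly convex and L_q-smooth; let B be symmetric positive definite with smallest eigenvalue μ_B > 0; let A have full row rank; let 0 < α < 2 and c > 2 L_q/μ_B². Let (p*, q*, ν*) be a stationary triple: A p* = B q*, ∇F(p*) = −Aᵀ ν*, ∇G(q*) = Bᵀ ν*. Then for every ε > 0 and η > 0 there exists a constant C > 0 such that: for all iterates p^{k+1}, q^k, q^{k+1}, ν^k, ν^{k+1}, ν_{1/2}^{k+1} satisfying the first-order optimality conditions of the second DRS scheme at step k together with ∇G(q^k) = Bᵀ ν^k, if ‖(A p^{k+1}, q^{k+1}, ν^{k+1}) − (A p*, q*, ν*)‖ ≤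 ε, L_c(p^{k+1}, q^{k+1}, ν^{k+1}) ≥ L_c(p*, q*, ν*), and ‖∇L_c(p^{k+1}, q^{k+1}, ν^{k+1})‖ ≥ η, then (L_c(p^{k+1}, q^{k+1}, ν^{k+1}) − L_c(p*, q*, ν*))^{1/2} ≤ C ‖∇L_c(p^{k+1}, q^{k+1}, ν^{k+1})‖. -/
/-!
Write `r = A p - B q` and let `w` be the multiplier with `∇F(p) = -Aᵀ w`. Convexity of `F`, weak
convexity of `G` and feasibility of `(p*, q*)` give
`L_c(p, q, ν) - L_c(p*, q*, ν*) ≤ ⟨ν - w, A p - A p*⟩ + σ/2 ‖q - q*‖² + c/2 ‖r‖²`.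
The partial gradients are `∇_p L_c = Aᵀ (ν + c r - w)` and `∇_ν L_c = r`. Since `A` is onto, `Aᵀ` is
bounded below, so `‖ν - w‖` and `‖r‖` are at most a constant times `‖∇L_c‖`. On the `ε`-ball the
right-hand side is therefore a quadratic polynomial in `‖∇L_c‖`, and `‖∇L_c‖ ≥ η` absorbs its lower
order terms into the quadratic one.
-/

open scoped RealInnerProductSpace

section

open scoped InnerProduct

theorem exists_norm_le_mul_norm_adjoint {𝕜 E H : Type*} [RCLike 𝕜]
    [NormedAddCommGroup E] [InnerProductSpace 𝕜 E] [CompleteSpace E]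
    [NormedAddCommGroup H] [InnerProductSpace 𝕜 H] [CompleteSpace H]
    {A : E →L[𝕜] H} (hA : Function.Surjective A) :
    ∃ K > 0, ∀ w, ‖w‖ ≤ K * ‖(A†) w‖ := by
  obtain ⟨K, hK, hpre⟩ := A.exists_preimage_norm_le hA
  refine ⟨K, hK, fun w => ?_⟩
  rcases eq_or_ne w 0 with rfl | hw
  · simp
  obtain ⟨x, rfl, hx⟩ := hpre w
  refine le_of_mul_le_mul_left ?_ (norm_pos_iff.2 hw)
  calc ‖A x‖ * ‖A x‖ = ‖inner 𝕜 x ((A†) (A x))‖ := by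
        rw [ContinuousLinearMap.adjoint_inner_right, ← inner_self_re_eq_norm,
          inner_self_eq_norm_mul_norm]
    _ ≤ ‖x‖ * ‖(A†) (A x)‖ := norm_inner_le_norm _ _
    _ ≤ K * ‖A x‖ * ‖(A†) (A x)‖ := by gcongr
    _ = ‖A x‖ * (K * ‖(A†) (A x)‖) := by ring

theorem quadratic_le_mul_sq_of_le {a b d g η : ℝ} (ha : 0 ≤ a) (hb : 0 ≤ b) (hη : 0 < η)
    (hg : η ≤ g) : a + b * g + d * g ^ 2 ≤ (a / η ^ 2 + b / η + d) * g ^ 2 := by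
  have hone : 1 ≤ g / η := (one_le_div hη).2 hg
  have hconst : a ≤ a * (g / η) ^ 2 := le_mul_of_one_le_right ha (one_le_pow₀ hone)
  have hlin : b * g ≤ b * g * (g / η) :=
    le_mul_of_one_le_right (mul_nonneg hb (hη.le.trans hg)) hone
  calc a + b * g + d * g ^ 2 ≤ a * (g / η) ^ 2 + b * g * (g / η) + d * g ^ 2 := by gcongr
    _ = (a / η ^ 2 + b / η + d) * g ^ 2 := by ring

theorem le_sqrt_sq_add_sq_add_sq (x y z : ℝ) :
    x ≤ √(x ^ 2 + y ^ 2 + z ^ 2) ∧ y ≤ √(x ^ 2 + y ^ 2 + z ^ 2) ∧ z ≤ √(x ^ 2 + y ^ 2 + z ^ 2) := by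
  refine ⟨?_, ?_, ?_⟩ <;> apply Real.le_sqrt_of_sq_le <;>
    linarith [sq_nonneg x, sq_nonneg y, sq_nonneg z]

/-- `v` is a proximal subgradient of `f` at `x` with modulus `σ`, the quadratic minorant being
required globally. For `σ = 0` this is the convex subdifferential; the gradient of a differentiable
`σ`-weakly convex function satisfies it at every point. -/
def IsProximalSubgradientAt {X : Type*} [NormedAddCommGroup X] [InnerProductSpace ℝ X]
    (σ : ℝ) (f : X → ℝ) (v x : X) : Prop :=
  ∀ y, f x + ⟪v, y - x⟫ - σ / 2 * ‖y - x‖ ^ 2 ≤ f y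

theorem IsProximalSubgradientAt.sub_le {X : Type*} [NormedAddCommGroup X] [InnerProductSpace ℝ X]
    {σ : ℝ} {f : X → ℝ} {v x : X} (h : IsProximalSubgradientAt σ f v x) (y : X) :
    f x - f y ≤ ⟪v, x - y⟫ + σ / 2 * ‖x - y‖ ^ 2 := by
  have hy := h y
  rw [← neg_sub x y, inner_neg_right, norm_neg] at hy
  linarith

variable {E E₂ H : Type*}
  [NormedAddCommGroup E] [InnerProductSpace ℝ E]
  [NormedAddCommGroup E₂] [InnerProductSpace ℝ E₂]
  [NormedAddCommGroup H] [InnerProductSpace ℝ H]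
  {F : E → ℝ} {G : E₂ → ℝ} {A : E →L[ℝ] H} {B : E₂ →L[ℝ] H} {c σ : ℝ}

theorem augLag_of_feasible {p : E} {q : E₂} (h : A p = B q) (ν : H) :
    augLag F G A B c p q ν = F p + G q := by
  simp [augLag, h]

variable [CompleteSpace E] [CompleteSpace E₂] [CompleteSpace H]

theorem augLag_sub_le {p p₀ : E} {q q₀ : E₂} {w : H} (ν ν₀ : H)
    (hF : IsProximalSubgradientAt 0 F (-(A†) w) p)
    (hG : IsProximalSubgradientAt σ G ((B†) ν) q) (h₀ : A p₀ = B q₀) :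
    augLag F G A B c p q ν - augLag F G A B c p₀ q₀ ν₀ ≤
      ⟪ν - w, A p - A p₀⟫ + σ / 2 * ‖q - q₀‖ ^ 2 + c / 2 * ‖A p - B q‖ ^ 2 := by
  have hFp : F p - F p₀ ≤ -⟪w, A p - A p₀⟫ := by
    simpa [ContinuousLinearMap.adjoint_inner_left] using hF.sub_le p₀
  have hGq : G q - G q₀ ≤ ⟪ν, B q - A p₀⟫ + σ / 2 * ‖q - q₀‖ ^ 2 := by
    simpa only [ContinuousLinearMap.adjoint_inner_left, map_sub, ← h₀] using hG.sub_le q₀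
  have hinner : ⟪ν, B q - A p₀⟫ + ⟪ν, A p - B q⟫ = ⟪ν, A p - A p₀⟫ := by
    rw [← inner_add_right, sub_add_sub_cancel']
  rw [augLag_of_feasible h₀, augLag, inner_sub_left]
  linarith

/-- The norm of the full gradient `∇L_c(p, q, ν)`, where `u` and `v` stand for (sub)gradients of `F`
at `p` and of `G` at `q`. -/
noncomputable def augLagGradNorm (A : E →L[ℝ] H) (B : E₂ →L[ℝ] H) (c : ℝ) (u : E) (v : E₂)
    (p : E) (q : E₂) (ν : H) : ℝ :=
  √(‖u + (A†) (ν + c • (A p - B q))‖ ^ 2 + ‖v - (B†) (ν + c • (A p - B q))‖ ^ 2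
    + ‖A p - B q‖ ^ 2)

theorem norm_constraint_le_augLagGradNorm (u : E) (v : E₂) (p : E) (q : E₂) (ν : H) :
    ‖A p - B q‖ ≤ augLagGradNorm A B c u v p q ν :=
  (le_sqrt_sq_add_sq_add_sq _ _ _).2.2

theorem norm_multiplier_sub_le_mul_augLagGradNorm {K : ℝ} (hK : 0 ≤ K)
    (hA : ∀ w, ‖w‖ ≤ K * ‖(A†) w‖) (v : E₂) (p : E) (q : E₂) (ν w : H) :
    ‖ν - w‖ ≤ (K + |c|) * augLagGradNorm A B c (-(A†) w) v p q ν := by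
  set g := augLagGradNorm A B c (-(A†) w) v p q ν
  set r := A p - B q
  have hgradp : ‖(A†) (ν + c • r - w)‖ ≤ g := by
    rw [map_sub, sub_eq_neg_add]
    exact (le_sqrt_sq_add_sq_add_sq _ _ _).1
  calc ‖ν - w‖ = ‖(ν + c • r - w) - c • r‖ := by congr 1; abel
    _ ≤ ‖ν + c • r - w‖ + ‖c • r‖ := norm_sub_le _ _
    _ ≤ K * ‖(A†) (ν + c • r - w)‖ + |c| * ‖r‖ := by
        rw [norm_smul, Real.norm_eq_abs]
        gcongr
        exact hA _
    _ ≤ K * g + |c| * g := by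
        gcongr
        exact norm_constraint_le_augLagGradNorm _ _ _ _ _
    _ = (K + |c|) * g := by ring

theorem augLag_sub_le_quadratic_augLagGradNorm {K ε : ℝ} (hK : 0 ≤ K)
    (hA : ∀ w, ‖w‖ ≤ K * ‖(A†) w‖) {p p₀ : E} {q q₀ : E₂} {ν ν₀ w : H}
    (hF : IsProximalSubgradientAt 0 F (-(A†) w) p)
    (hG : IsProximalSubgradientAt σ G ((B†) ν) q) (h₀ : A p₀ = B q₀)
    (hp : ‖A p - A p₀‖ ≤ ε) (hq : ‖q - q₀‖ ≤ ε) :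
    augLag F G A B c p q ν - augLag F G A B c p₀ q₀ ν₀ ≤
      |σ| / 2 * ε ^ 2 + (K + |c|) * ε * augLagGradNorm A B c (-(A†) w) ((B†) ν) p q ν
        + |c| / 2 * augLagGradNorm A B c (-(A†) w) ((B†) ν) p q ν ^ 2 := by
  set g := augLagGradNorm A B c (-(A†) w) ((B†) ν) p q ν
  have hinner : ⟪ν - w, A p - A p₀⟫ ≤ (K + |c|) * ε * g := by
    have hνw : ‖ν - w‖ ≤ (K + |c|) * g := norm_multiplier_sub_le_mul_augLagGradNorm hK hA ..
    calc ⟪ν - w, A p - A p₀⟫ ≤ ‖ν - w‖ * ‖A p - A p₀‖ := real_inner_le_norm _ _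
      _ ≤ (K + |c|) * g * ε := by
          gcongr
          exact (norm_nonneg _).trans hνw
      _ = (K + |c|) * ε * g := by ring
  have hweak : σ / 2 * ‖q - q₀‖ ^ 2 ≤ |σ| / 2 * ε ^ 2 := by
    gcongr
    exact le_abs_self σ
  have hpenalty : c / 2 * ‖A p - B q‖ ^ 2 ≤ |c| / 2 * g ^ 2 := by
    gcongr
    · exact le_abs_self c
    · exact norm_constraint_le_augLagGradNorm _ _ _ _ _
  linarith [augLag_sub_le (c := c) ν ν₀ hF hG h₀]

theorem kl_exponent_half_second_drs_general (F : E → ℝ) (G : E₂ → ℝ) {A : E →L[ℝ] H}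
    (hA : Function.Surjective A) (B : E₂ →L[ℝ] H) (c σ : ℝ) {p₀ : E} {q₀ : E₂}
    (h₀ : A p₀ = B q₀) (ν₀ : H) {ε η : ℝ} (hε : 0 < ε) (hη : 0 < η) :
    ∃ C > 0, ∀ (p : E) (q : E₂) (ν w : H),
      IsProximalSubgradientAt 0 F (-(A†) w) p → IsProximalSubgradientAt σ G ((B†) ν) q →
      ‖A p - A p₀‖ ≤ ε → ‖q - q₀‖ ≤ ε →
      η ≤ augLagGradNorm A B c (-(A†) w) ((B†) ν) p q ν →
      augLag F G A B c p q ν - augLag F G A B c p₀ q₀ ν₀ ≤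
        C * augLagGradNorm A B c (-(A†) w) ((B†) ν) p q ν ^ 2 := by
  obtain ⟨K, hK, hbound⟩ := exists_norm_le_mul_norm_adjoint hA
  refine ⟨|σ| / 2 * ε ^ 2 / η ^ 2 + (K + |c|) * ε / η + |c| / 2, by positivity, ?_⟩
  intro p q ν w hF hG hp hq hg
  exact (augLag_sub_le_quadratic_augLagGradNorm hK.le hbound hF hG h₀ hp hq).trans
    (quadratic_le_mul_sq_of_le (by positivity) (by positivity) hη hg)

end

/-- (Kurdyka–Łojasiewicz property with exponent `1/2` for the second
DRS scheme.) Let `F` be differentiable and convex; `G` differentiable, `σ_G`-weakly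
convex and `L_q`-smooth; `B` symmetric positive definite with smallest eigenvalue
`μ_B > 0`; `A` of full row rank; `0 < α < 2` and `c > 2 L_q/μ_B²`. Let `(p*, q*, ν*)` be
stationary. Then for every `ε > 0`, `η > 0` there is `C > 0` such that: for all iterates
satisfying the first-order optimality conditions of the second DRS scheme at step `k`
together with `∇G(qᵏ) = Bᵀ νᵏ`, if
`‖(A pᵏ⁺¹, qᵏ⁺¹, νᵏ⁺¹) - (A p*, q*, ν*)‖ ≤ ε`,
`L_c(pᵏ⁺¹, qᵏ⁺¹, νᵏ⁺¹) ≥ L_c(p*, q*, ν*)` and `‖∇L_c(pᵏ⁺¹, qᵏ⁺¹, νᵏ⁺¹)‖ ≥ η`, then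
`(L_c(pᵏ⁺¹, qᵏ⁺¹, νᵏ⁺¹) - L_c(p*, q*, ν*))^{1/2} ≤ C ‖∇L_c(pᵏ⁺¹, qᵏ⁺¹, νᵏ⁺¹)‖`.
Here the squared norm of the full gradient `∇L_c` is the sum of the squared norms of its
three components, and the norm of the collective point is the square root of the sum of
the squared norms of the components. -/
theorem kl_exponent_half_second_drs {E E₂ : Type*}
    [NormedAddCommGroup E] [InnerProductSpace ℝ E] [CompleteSpace E]
    [NormedAddCommGroup E₂] [InnerProductSpace ℝ E₂] [CompleteSpace E₂]
    (F : E → ℝ) (gradF : E → E) (hFdiff : ∀ x, HasGradientAt F (gradF x) x)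
    (hFconv : ∀ x y, F y ≥ F x + ⟪gradF x, y - x⟫)
    (G : E₂ → ℝ) (gradG : E₂ → E₂) (hGdiff : ∀ x, HasGradientAt G (gradG x) x)
    (σG Lq : ℝ)
    (hGwc : ∀ x y, G y ≥ G x + ⟪gradG x, y - x⟫ - σG / 2 * ‖y - x‖ ^ 2)
    (hGsmooth : ∀ x y, ‖gradG x - gradG y‖ ≤ Lq * ‖x - y‖)
    (B : E₂ →L[ℝ] E₂) (hBsym : ∀ x y, ⟪B x, y⟫ = ⟪x, B y⟫)
    (μB : ℝ) (hμB : 0 < μB) (hBlb : ∀ x, μB * ‖x‖ ^ 2 ≤ ⟪B x, x⟫)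
    (A : E →L[ℝ] E₂) (At : E₂ →L[ℝ] E)
    (hAt : ∀ (x : E) (ξ : E₂), ⟪A x, ξ⟫ = ⟪x, At ξ⟫)
    (hAsurj : Function.Surjective A)
    (α c : ℝ) (hα0 : 0 < α) (hα2 : α < 2) (hc : 2 * Lq / μB ^ 2 < c)
    (pstar : E) (qstar νstar : E₂)
    (hsta1 : A pstar = B qstar)
    (hsta2 : gradF pstar = -(At νstar))
    (hsta3 : gradG qstar = B νstar)
    (ε η : ℝ) (hε : 0 < ε) (hη : 0 < η) :
    ∃ C > 0, ∀ (pk1 : E) (qk qk1 νk νk1 νh : E₂),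
      gradF pk1 = -(At (νk + c • (A pk1 - B qk))) →
      νh = νk - ((1 - α) * c) • (A pk1 - B qk) →
      gradG qk1 = B νk1 →
      νk1 = νh + c • (A pk1 - B qk1) →
      gradG qk = B νk →
      Real.sqrt (‖A pk1 - A pstar‖ ^ 2 + ‖qk1 - qstar‖ ^ 2 + ‖νk1 - νstar‖ ^ 2) ≤ ε →
      augLag F G A B c pstar qstar νstar ≤ augLag F G A B c pk1 qk1 νk1 →
      η ≤ Real.sqrt (‖gradF pk1 + At (νk1 + c • (A pk1 - B qk1))‖ ^ 2
            + ‖gradG qk1 - B (νk1 + c • (A pk1 - B qk1))‖ ^ 2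
            + ‖A pk1 - B qk1‖ ^ 2) →
      Real.sqrt (augLag F G A B c pk1 qk1 νk1 - augLag F G A B c pstar qstar νstar) ≤
        C * Real.sqrt (‖gradF pk1 + At (νk1 + c • (A pk1 - B qk1))‖ ^ 2
            + ‖gradG qk1 - B (νk1 + c • (A pk1 - B qk1))‖ ^ 2
            + ‖A pk1 - B qk1‖ ^ 2) := by
  obtain rfl : At = A.adjoint := (At.eq_adjoint_iff A).2 fun ξ x => by
    rw [real_inner_comm, ← hAt, real_inner_comm]
  have hB : B.adjoint = B := ((B.eq_adjoint_iff B).2 hBsym).symm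
  obtain ⟨C, hC, hle⟩ :=
    kl_exponent_half_second_drs_general F G hAsurj B c σG hsta1 νstar hε hη
  refine ⟨√C, Real.sqrt_pos.2 hC, ?_⟩
  intro p qk q νk ν _ hp _ hq _ _ hball _ hg
  obtain ⟨hAp, hqq, -⟩ :=
    le_sqrt_sq_add_sq_add_sq ‖A p - A pstar‖ ‖q - qstar‖ ‖ν - νstar‖
  have hF : IsProximalSubgradientAt 0 F (gradF p) p := fun y => by simpa using hFconv p y
  have hG : IsProximalSubgradientAt σG G (gradG q) q := hGwc q
  have hkl := hle p q ν (νk + c • (A p - B qk))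
  rw [hB, ← hp, ← hq, augLagGradNorm, hB] at hkl
  rw [← Real.sqrt_sq (Real.sqrt_nonneg (_ + _ + _)), ← Real.sqrt_mul hC.le]
  exact Real.sqrt_le_sqrt (hkl hF hG (hAp.trans hball) (hqq.trans hball) hg)
end

section
/- (Linear convergence under a Łojasiewicz exponent of 1/2.) Let (w^k)_{k ≥ 0} be a sequence in ℝⁿ and (L^k)_{k ≥ 0} a nonincreasing sequence of nonnegative reals, and let C₁, C₂ > 0 be constants such that for all k ≥ 1: L^k − L^{k+1} ≥ C₁ ‖w^{k+1} − w^k‖² and (L^k)^{1/2} ≤ C₂ ‖w^k − w^{k−1}‖. Then ∑_{k ≥ 0} ‖w^{k+1} − w^k‖ < ∞, so w^k converges to some limit w^∞, and there exists Q ∈ (0,1), depending only on C₁ and C₂ (one may take Q = (1 + 2C₂²/C₁)/(2 + 2C₂²/C₁)), such that the tails Δ_k := ∑_{l ≥ k} ‖w^{l+1} − w^l‖ satisfy Δ_k ≤ Q Δ_{k−1} for all k ≥ 1; consequently there exists τ > 0 with ‖w^k − w^∞‖ ≤ τ Q^k for all k. -/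
/-!
Sufficient decrease and the Łojasiewicz inequality combine, through AM-GM, into
`aₖ₊₁ ≤ aₖ / 2 + (C₂ / C₁) (√Lₖ₊₁ - √Lₖ₊₂)` for the step lengths `aₖ = ‖wᵏ⁺¹ - wᵏ‖`. The last term
telescopes, so the steps are summable and `Δₖ₊₁ ≤ Δₖ / 2 + (C₂ / C₁) √Lₖ₊₁`. A second use of the
Łojasiewicz inequality bounds the last term by `(C₂² / C₁) aₖ = (C₂² / C₁) (Δₖ - Δₖ₊₁)`, and solving
for `Δₖ₊₁` gives the contraction.
-/

open Filter Topology

/-- The tail `Δ_k = ∑_{l ≥ k} a_l` of a series, indexed by the offset `l - k`. As for `tsum`, the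
value is `0` when `a` is not summable. -/
noncomputable def tailSum (a : ℕ → ℝ) (k : ℕ) : ℝ :=
  ∑' l, a (k + l)

/-- The ratio `Q` by which the tails of the step lengths contract, in terms of the constants `C₁` of
sufficient decrease and `C₂` of the Łojasiewicz inequality. -/
noncomputable def klRate (C₁ C₂ : ℝ) : ℝ :=
  (1 + 2 * C₂ ^ 2 / C₁) / (2 + 2 * C₂ ^ 2 / C₁)

section TailSum

variable {a : ℕ → ℝ}

theorem summable_comp_add_left (ha : Summable a) (k : ℕ) : Summable fun l => a (k + l) :=
  ha.comp_injective (add_right_injective k)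

theorem tailSum_nonneg (ha : ∀ k, 0 ≤ a k) (k : ℕ) : 0 ≤ tailSum a k :=
  tsum_nonneg fun _ => ha _

theorem tailSum_eq_add_tailSum_succ (ha : Summable a) (k : ℕ) :
    tailSum a k = a k + tailSum a (k + 1) := by
  simp only [tailSum, (summable_comp_add_left ha k).tsum_eq_zero_add, add_zero, add_assoc,
    add_comm 1]

theorem tendsto_sum_range_tailSum (ha : Summable a) (k : ℕ) :
    Tendsto (fun N => ∑ l ∈ Finset.range N, a (k + l)) atTop (𝓝 (tailSum a k)) :=
  (summable_comp_add_left ha k).hasSum.tendsto_sum_nat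

end TailSum

section TelescopingPerturbation

variable {a u : ℕ → ℝ} {q c : ℝ}

theorem sum_range_succ_le_of_le_mul_add_sub (hu : ∀ k, 0 ≤ u k)
    (h : ∀ k, a (k + 1) ≤ q * a k + (u k - u (k + 1))) (k N : ℕ) :
    ∑ l ∈ Finset.range N, a (k + 1 + l) ≤ q * ∑ l ∈ Finset.range N, a (k + l) + u k :=
  calc ∑ l ∈ Finset.range N, a (k + 1 + l)
      ≤ ∑ l ∈ Finset.range N, (q * a (k + l) + (u (k + l) - u (k + (l + 1)))) :=
        Finset.sum_le_sum fun l _ => by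
          simpa only [add_right_comm, ← add_assoc] using h (k + l)
    _ = q * ∑ l ∈ Finset.range N, a (k + l) + (u k - u (k + N)) := by
        rw [Finset.sum_add_distrib, ← Finset.mul_sum,
          Finset.sum_range_sub' (fun l => u (k + l)), add_zero]
    _ ≤ q * ∑ l ∈ Finset.range N, a (k + l) + u k := by linarith [hu (k + N)]

theorem summable_of_le_mul_add_sub (hq : q < 1) (ha : ∀ k, 0 ≤ a k) (hu : ∀ k, 0 ≤ u k)
    (h : ∀ k, a (k + 1) ≤ q * a k + (u k - u (k + 1))) : Summable a := by
  refine summable_of_sum_range_le (c := (a 0 + u 0) / (1 - q)) ha fun N => ?_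
  have hshift : ∑ l ∈ Finset.range N, a (l + 1) ≤ q * ∑ l ∈ Finset.range N, a l + u 0 := by
    simpa only [zero_add, add_comm 1] using sum_range_succ_le_of_le_mul_add_sub hu h 0 N
  have hsplit : ∑ l ∈ Finset.range N, a l + a N = ∑ l ∈ Finset.range N, a (l + 1) + a 0 := by
    rw [← Finset.sum_range_succ, Finset.sum_range_succ']
  rw [le_div_iff₀ (sub_pos.2 hq)]
  linarith [ha N]

theorem tailSum_succ_le_mul_add (ha : Summable a) (hu : ∀ k, 0 ≤ u k)
    (h : ∀ k, a (k + 1) ≤ q * a k + (u k - u (k + 1))) (k : ℕ) :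
    tailSum a (k + 1) ≤ q * tailSum a k + u k :=
  le_of_tendsto_of_tendsto' (tendsto_sum_range_tailSum ha (k + 1))
    (((tendsto_sum_range_tailSum ha k).const_mul q).add_const (u k))
    (sum_range_succ_le_of_le_mul_add_sub hu h k)

theorem tailSum_succ_le_div_mul (hc : 0 ≤ c) (ha : Summable a) (hu : ∀ k, 0 ≤ u k)
    (h : ∀ k, a (k + 1) ≤ q * a k + (u k - u (k + 1))) (huc : ∀ k, u k ≤ c * a k) (k : ℕ) :
    tailSum a (k + 1) ≤ (q + c) / (1 + c) * tailSum a k := by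
  have hbound : tailSum a (k + 1) ≤ q * tailSum a k + c * (tailSum a k - tailSum a (k + 1)) :=
    calc tailSum a (k + 1) ≤ q * tailSum a k + u k := tailSum_succ_le_mul_add ha hu h k
      _ ≤ q * tailSum a k + c * a k := by gcongr; exact huc k
      _ = q * tailSum a k + c * (tailSum a k - tailSum a (k + 1)) := by
        rw [tailSum_eq_add_tailSum_succ ha k, add_sub_cancel_right]
  rw [div_mul_eq_mul_div, le_div_iff₀ (by positivity)]
  linarith

end TelescopingPerturbation

section KLRate

variable {C₁ C₂ : ℝ}

theorem klRate_eq_half_add_div_one_add (C₁ C₂ : ℝ) :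
    klRate C₁ C₂ = (1 / 2 + C₂ ^ 2 / C₁) / (1 + C₂ ^ 2 / C₁) := by
  rw [klRate, ← mul_div_mul_left _ (1 + C₂ ^ 2 / C₁) (two_ne_zero (α := ℝ))]
  ring_nf

theorem klRate_pos (hC₁ : 0 < C₁) : 0 < klRate C₁ C₂ := by
  unfold klRate
  positivity

theorem klRate_lt_one (hC₁ : 0 < C₁) : klRate C₁ C₂ < 1 := by
  rw [klRate, div_lt_one (by positivity)]
  linarith

end KLRate

section StepLengths

variable {a s : ℕ → ℝ} {C₁ C₂ : ℝ}

theorem le_half_add_of_mul_sq_le_sq_sub_sq {x y s t : ℝ} (hC₁ : 0 < C₁) (hC₂ : 0 ≤ C₂)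
    (hx : 0 ≤ x) (hs : 0 ≤ s) (hdec : C₁ * y ^ 2 ≤ s ^ 2 - t ^ 2) (hkl : s ≤ C₂ * x) :
    y ≤ x / 2 + C₂ / C₁ * (s - t) := by
  have hts : 0 ≤ s - t :=
    sub_nonneg.2 (le_of_sq_le_sq (by linarith [mul_nonneg hC₁.le (sq_nonneg y)]) hs)
  have hsq : y ^ 2 ≤ 4 * (x / 2) * (C₂ / C₁ * (s - t)) := by
    refine le_of_mul_le_mul_left ?_ hC₁
    calc C₁ * y ^ 2 ≤ s ^ 2 - t ^ 2 := hdec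
      _ ≤ 2 * s * (s - t) := by linarith [sq_nonneg (s - t)]
      _ ≤ 2 * (C₂ * x) * (s - t) := by gcongr
      _ = C₁ * (4 * (x / 2) * (C₂ / C₁ * (s - t))) := by field_simp; ring
  exact le_of_sq_le_sq (hsq.trans (four_mul_le_sq_add _ _)) (by positivity)

theorem step_succ_le_half_mul_add_sub (hC₁ : 0 < C₁) (hC₂ : 0 ≤ C₂) (ha : ∀ k, 0 ≤ a k)
    (hs : ∀ k, 0 ≤ s k) (hdec : ∀ k, C₁ * a (k + 1) ^ 2 ≤ s k ^ 2 - s (k + 1) ^ 2)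
    (hkl : ∀ k, s k ≤ C₂ * a k) (k : ℕ) :
    a (k + 1) ≤ 1 / 2 * a k + (C₂ / C₁ * s k - C₂ / C₁ * s (k + 1)) := by
  linarith [le_half_add_of_mul_sq_le_sq_sub_sq hC₁ hC₂ (ha k) (hs k) (hdec k) (hkl k)]

theorem summable_of_sufficientDecrease_of_kl (hC₁ : 0 < C₁) (hC₂ : 0 ≤ C₂) (ha : ∀ k, 0 ≤ a k)
    (hs : ∀ k, 0 ≤ s k) (hdec : ∀ k, C₁ * a (k + 1) ^ 2 ≤ s k ^ 2 - s (k + 1) ^ 2)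
    (hkl : ∀ k, s k ≤ C₂ * a k) : Summable a :=
  summable_of_le_mul_add_sub one_half_lt_one ha
    (fun k => mul_nonneg (div_nonneg hC₂ hC₁.le) (hs k))
    (step_succ_le_half_mul_add_sub hC₁ hC₂ ha hs hdec hkl)

theorem tailSum_succ_le_klRate_mul (hC₁ : 0 < C₁) (hC₂ : 0 ≤ C₂) (ha : ∀ k, 0 ≤ a k)
    (hs : ∀ k, 0 ≤ s k) (hdec : ∀ k, C₁ * a (k + 1) ^ 2 ≤ s k ^ 2 - s (k + 1) ^ 2)
    (hkl : ∀ k, s k ≤ C₂ * a k) (k : ℕ) :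
    tailSum a (k + 1) ≤ klRate C₁ C₂ * tailSum a k := by
  have hbound (k : ℕ) : C₂ / C₁ * s k ≤ C₂ ^ 2 / C₁ * a k :=
    calc C₂ / C₁ * s k ≤ C₂ / C₁ * (C₂ * a k) := by gcongr; exact hkl k
      _ = C₂ ^ 2 / C₁ * a k := by ring
  rw [klRate_eq_half_add_div_one_add]
  exact tailSum_succ_le_div_mul (by positivity)
    (summable_of_sufficientDecrease_of_kl hC₁ hC₂ ha hs hdec hkl)
    (fun k => mul_nonneg (div_nonneg hC₂ hC₁.le) (hs k))
    (step_succ_le_half_mul_add_sub hC₁ hC₂ ha hs hdec hkl) hbound k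

end StepLengths

section PseudoMetricSpace

variable {X : Type*} [PseudoMetricSpace X] {w : ℕ → X}

theorem dist_le_tailSum_zero_mul_pow {a : ℕ → ℝ} {x : X} {Q : ℝ} (hQ : 0 ≤ Q)
    (ha : Summable a) (hw : ∀ k, dist (w k) (w (k + 1)) ≤ a k) (hx : Tendsto w atTop (𝓝 x))
    (htail : ∀ k, tailSum a (k + 1) ≤ Q * tailSum a k) (k : ℕ) :
    dist (w k) x ≤ tailSum a 0 * Q ^ k :=
  calc dist (w k) x ≤ tailSum a k := dist_le_tsum_of_dist_le_of_tendsto a hw ha hx k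
    _ ≤ Q ^ k * tailSum a 0 := le_geom hQ k fun j _ => htail j
    _ = tailSum a 0 * Q ^ k := mul_comm _ _

theorem linear_convergence_of_kl_half_general [CompleteSpace X] {L : ℕ → ℝ} {C₁ C₂ : ℝ}
    (hC₁ : 0 < C₁) (hC₂ : 0 ≤ C₂) (hL : ∀ k ≥ 1, 0 ≤ L k)
    (hdec : ∀ k ≥ 1, C₁ * dist (w (k + 1)) (w k) ^ 2 ≤ L k - L (k + 1))
    (hkl : ∀ k ≥ 1, √(L k) ≤ C₂ * dist (w k) (w (k - 1))) :
    Summable (fun k => dist (w (k + 1)) (w k)) ∧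
    ∃ x, Tendsto w atTop (𝓝 x) ∧
      (0 < klRate C₁ C₂ ∧ klRate C₁ C₂ < 1) ∧
      (∀ k ≥ 1, ∑' l, dist (w (k + l + 1)) (w (k + l)) ≤
        klRate C₁ C₂ * ∑' l, dist (w (k - 1 + l + 1)) (w (k - 1 + l))) ∧
      ∃ τ > 0, ∀ k, dist (w k) x ≤ τ * klRate C₁ C₂ ^ k := by
  set a : ℕ → ℝ := fun k => dist (w (k + 1)) (w k)
  have ha (k : ℕ) : 0 ≤ a k := dist_nonneg
  have hsqrt (k : ℕ) : 0 ≤ √(L (k + 1)) := Real.sqrt_nonneg _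
  have hdec_sqrt (k : ℕ) : C₁ * a (k + 1) ^ 2 ≤ √(L (k + 1)) ^ 2 - √(L (k + 1 + 1)) ^ 2 := by
    rw [Real.sq_sqrt (hL _ (by lia)), Real.sq_sqrt (hL _ (by lia))]
    exact hdec (k + 1) (by lia)
  have hkl_succ (k : ℕ) : √(L (k + 1)) ≤ C₂ * a k := hkl (k + 1) (by lia)
  have hsum : Summable a :=
    summable_of_sufficientDecrease_of_kl hC₁ hC₂ ha hsqrt hdec_sqrt hkl_succ
  have htail : ∀ k, tailSum a (k + 1) ≤ klRate C₁ C₂ * tailSum a k :=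
    tailSum_succ_le_klRate_mul hC₁ hC₂ ha hsqrt hdec_sqrt hkl_succ
  have hQ : 0 < klRate C₁ C₂ := klRate_pos hC₁
  have hw (k : ℕ) : dist (w k) (w (k + 1)) ≤ a k := (dist_comm _ _).le
  obtain ⟨x, hx⟩ := cauchySeq_tendsto_of_complete (cauchySeq_of_dist_le_of_summable a hw hsum)
  refine ⟨hsum, x, hx, ⟨hQ, klRate_lt_one hC₁⟩, Nat.le_induction (htail 0) fun k _ _ => htail k,
    tailSum a 0 + 1, add_pos_of_nonneg_of_pos (tailSum_nonneg ha 0) one_pos, fun k => ?_⟩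
  calc dist (w k) x ≤ tailSum a 0 * klRate C₁ C₂ ^ k :=
        dist_le_tailSum_zero_mul_pow hQ.le hsum hw hx htail k
    _ ≤ (tailSum a 0 + 1) * klRate C₁ C₂ ^ k := by gcongr; exact le_add_of_nonneg_right one_pos.le

end PseudoMetricSpace

/-- (Linear convergence under a Łojasiewicz exponent of `1/2`.)
Let `(wᵏ)` be a sequence in `ℝⁿ` and `(Lᵏ)` a nonincreasing sequence of nonnegative
reals with constants `C₁, C₂ > 0` such that for all `k ≥ 1`:
`Lᵏ - Lᵏ⁺¹ ≥ C₁ ‖wᵏ⁺¹ - wᵏ‖²` and `(Lᵏ)^{1/2} ≤ C₂ ‖wᵏ - wᵏ⁻¹‖`. Then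
`∑ₖ ‖wᵏ⁺¹ - wᵏ‖ < ∞`, so `wᵏ` converges to some `w^∞`; moreover with
`Q := (1 + 2C₂²/C₁)/(2 + 2C₂²/C₁) ∈ (0,1)`, the tails
`Δ_k := ∑_{l ≥ k} ‖w^{l+1} - w^l‖` satisfy `Δ_k ≤ Q Δ_{k-1}` for all `k ≥ 1`, and
there is `τ > 0` with `‖wᵏ - w^∞‖ ≤ τ Qᵏ` for all `k`. -/
theorem linear_convergence_of_kl_half {n : ℕ}
    (w : ℕ → EuclideanSpace ℝ (Fin n)) (L : ℕ → ℝ)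
    (hLmono : ∀ k, L (k + 1) ≤ L k) (hLnonneg : ∀ k, 0 ≤ L k)
    (C₁ C₂ : ℝ) (hC₁ : 0 < C₁) (hC₂ : 0 < C₂)
    (hdec : ∀ k ≥ 1, C₁ * ‖w (k + 1) - w k‖ ^ 2 ≤ L k - L (k + 1))
    (hkl : ∀ k ≥ 1, Real.sqrt (L k) ≤ C₂ * ‖w k - w (k - 1)‖) :
    Summable (fun k => ‖w (k + 1) - w k‖) ∧
    ∃ winf : EuclideanSpace ℝ (Fin n),
      Filter.Tendsto w Filter.atTop (nhds winf) ∧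
      (0 < (1 + 2 * C₂ ^ 2 / C₁) / (2 + 2 * C₂ ^ 2 / C₁) ∧
        (1 + 2 * C₂ ^ 2 / C₁) / (2 + 2 * C₂ ^ 2 / C₁) < 1) ∧
      (∀ k ≥ 1, (∑' l : ℕ, ‖w (k + l + 1) - w (k + l)‖) ≤
        ((1 + 2 * C₂ ^ 2 / C₁) / (2 + 2 * C₂ ^ 2 / C₁)) *
          ∑' l : ℕ, ‖w ((k - 1) + l + 1) - w ((k - 1) + l)‖) ∧
      ∃ τ > 0, ∀ k,
        ‖w k - winf‖ ≤ τ * ((1 + 2 * C₂ ^ 2 / C₁) / (2 + 2 * C₂ ^ 2 / C₁)) ^ k := by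
  simp only [← dist_eq_norm] at hdec hkl ⊢
  exact linear_convergence_of_kl_half_general hC₁ hC₂.le (fun k _ => hLnonneg k) hdec hkl
end

section
/- (Q-linear convergence of function values and R-linear convergence of iterates.) Let (w^k)_{k ≥ 0} be a sequence in ℝⁿ converging to a point w*, let (Δ^k)_{k ≥ 0} be a nonincreasing sequence of nonnegative reals, and let ρ > 0, K > 0, η ≥ 0 with Kη < 1 be constants such that for all k: ρ ‖w^k − w^{k+1}‖² ≤ Δ^k − Δ^{k+1}, Δ^{k+1} ≤ K (Δ^k − Δ^{k+1}) + K ‖w^{k+1} − w*‖², and ‖w^{k+1} − w*‖² ≤ η Δ^{k+1}. Then Δ^{k+1} ≤ Q Δ^k for all k with Q := K/(1 + K − Kη) ∈ (0,1), so (Δ^k) converges Q-linearly to 0; and there exists τ > 0 such that ‖w^k − w*‖ ≤ τ (√Q)^k for all k, i.e. (w^k) converges R-linearly to w*. -/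
/-!
Inserting `‖wᵏ⁺¹ - w*‖² ≤ η Δᵏ⁺¹` into `Δᵏ⁺¹ ≤ K (Δᵏ - Δᵏ⁺¹) + K ‖wᵏ⁺¹ - w*‖²` and collecting the
terms in `Δᵏ⁺¹` gives `(1 + K - K η) Δᵏ⁺¹ ≤ K Δᵏ`, which is the contraction by `Q`. Hence
`Δᵏ ≤ Qᵏ Δ⁰`, and the error bound turns this into `‖wᵏ - w*‖ ≤ √(η Δ⁰) (√Q)ᵏ` for `k ≥ 1`. The error
bound says nothing about `w⁰`, so the constant `τ` also has to absorb `‖w⁰ - w*‖`.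
-/

section OrderedField

variable {𝕜 : Type*} [Field 𝕜] [LinearOrder 𝕜] [IsStrictOrderedRing 𝕜] {K η : 𝕜}

lemma div_one_add_sub_mul_mem_Ioo (hK : 0 < K) (hKη : K * η < 1) :
    K / (1 + K - K * η) ∈ Set.Ioo 0 1 := by
  have hden : K < 1 + K - K * η := by linarith
  exact ⟨div_pos hK (hK.trans hden), (div_lt_one (hK.trans hden)).2 hden⟩

lemma le_div_mul_of_le_mul_sub_add_mul {a b e : 𝕜} (hK : 0 ≤ K) (hKη : K * η < 1 + K)
    (hb : b ≤ K * (a - b) + K * e) (he : e ≤ η * b) :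
    b ≤ K / (1 + K - K * η) * a := by
  rw [div_mul_eq_mul_div, le_div_iff₀ (sub_pos.2 hKη)]
  have hKe : K * e ≤ K * (η * b) := mul_le_mul_of_nonneg_left he hK
  linarith

lemma exists_pos_forall_le_mul_pow {u : ℕ → 𝕜} {c r : 𝕜} (hr : 0 ≤ r)
    (hu : ∀ k, u (k + 1) ≤ c * r ^ (k + 1)) :
    ∃ τ > 0, ∀ k, u k ≤ τ * r ^ k := by
  refine ⟨max 1 (max c (u 0)), by positivity, fun k ↦ ?_⟩
  cases k with
  | zero => simp
  | succ k =>
    have hc : c ≤ max 1 (max c (u 0)) := le_max_of_le_right (le_max_left _ _)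
    exact (hu k).trans (mul_le_mul_of_nonneg_right hc (pow_nonneg hr _))

end OrderedField

lemma le_sqrt_mul_sqrt_pow_of_sq_le {δ : ℕ → ℝ} {Q η e : ℝ} {k : ℕ} (hQ : 0 ≤ Q) (hη : 0 ≤ η)
    (hδ : ∀ j, δ (j + 1) ≤ Q * δ j) (he : e ^ 2 ≤ η * δ k) :
    e ≤ √(η * δ 0) * √Q ^ k := by
  have hδk : δ k ≤ Q ^ k * δ 0 := le_geom hQ k fun j _ ↦ hδ j
  have hsqrt : Q ^ k = (√Q ^ k) ^ 2 := by rw [pow_right_comm, Real.sq_sqrt hQ]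
  have hsq : e ^ 2 ≤ η * δ 0 * (√Q ^ k) ^ 2 :=
    calc e ^ 2 ≤ η * δ k := he
      _ ≤ η * (Q ^ k * δ 0) := mul_le_mul_of_nonneg_left hδk hη
      _ = η * δ 0 * (√Q ^ k) ^ 2 := by rw [hsqrt]; ring
  calc e ≤ √(η * δ 0 * (√Q ^ k) ^ 2) := Real.le_sqrt_of_sq_le hsq
    _ = √(η * δ 0) * √Q ^ k := by
      rw [Real.sqrt_mul' _ (sq_nonneg _), Real.sqrt_sq (by positivity)]

theorem qlinear_values_rlinear_iterates_general {X : Type*} [PseudoMetricSpace X]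
    (w : ℕ → X) (wstar : X) (Δ : ℕ → ℝ) (K η : ℝ) (hK : 0 < K) (hη : 0 ≤ η) (hKη : K * η < 1)
    (hvalue : ∀ k, Δ (k + 1) ≤ K * (Δ k - Δ (k + 1)) + K * dist (w (k + 1)) wstar ^ 2)
    (herror : ∀ k, dist (w (k + 1)) wstar ^ 2 ≤ η * Δ (k + 1)) :
    (0 < K / (1 + K - K * η) ∧ K / (1 + K - K * η) < 1) ∧
    (∀ k, Δ (k + 1) ≤ (K / (1 + K - K * η)) * Δ k) ∧
    ∃ τ > 0, ∀ k, dist (w k) wstar ≤ τ * √(K / (1 + K - K * η)) ^ k := by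
  have hQ : K / (1 + K - K * η) ∈ Set.Ioo 0 1 := div_one_add_sub_mul_mem_Ioo hK hKη
  have hstep : ∀ k, Δ (k + 1) ≤ K / (1 + K - K * η) * Δ k := fun k ↦
    le_div_mul_of_le_mul_sub_add_mul hK.le (by linarith) (hvalue k) (herror k)
  exact ⟨hQ, hstep, exists_pos_forall_le_mul_pow (Real.sqrt_nonneg _) fun k ↦
    le_sqrt_mul_sqrt_pow_of_sq_le hQ.1.le hη hstep (herror k)⟩

/-- (Q-linear convergence of function values and R-linear convergence
of iterates.) Let `(wᵏ)` be a sequence in `ℝⁿ` converging to `w*`, `(Δᵏ)` a nonincreasing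
sequence of nonnegative reals, and `ρ > 0`, `K > 0`, `η ≥ 0` with `K η < 1` such that for
all `k`: `ρ ‖wᵏ - wᵏ⁺¹‖² ≤ Δᵏ - Δᵏ⁺¹`, `Δᵏ⁺¹ ≤ K (Δᵏ - Δᵏ⁺¹) + K ‖wᵏ⁺¹ - w*‖²`, and
`‖wᵏ⁺¹ - w*‖² ≤ η Δᵏ⁺¹`. Then with `Q := K/(1 + K - K η) ∈ (0,1)` one has
`Δᵏ⁺¹ ≤ Q Δᵏ` for all `k` (Q-linear convergence of `(Δᵏ)` to `0`), and there exists
`τ > 0` with `‖wᵏ - w*‖ ≤ τ (√Q)ᵏ` for all `k` (R-linear convergence of `(wᵏ)`). -/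
theorem qlinear_values_rlinear_iterates {n : ℕ}
    (w : ℕ → EuclideanSpace ℝ (Fin n)) (wstar : EuclideanSpace ℝ (Fin n))
    (hconv : Filter.Tendsto w Filter.atTop (nhds wstar))
    (Δ : ℕ → ℝ) (hΔmono : ∀ k, Δ (k + 1) ≤ Δ k) (hΔnonneg : ∀ k, 0 ≤ Δ k)
    (ρ K η : ℝ) (hρ : 0 < ρ) (hK : 0 < K) (hη : 0 ≤ η) (hKη : K * η < 1)
    (h1 : ∀ k, ρ * ‖w k - w (k + 1)‖ ^ 2 ≤ Δ k - Δ (k + 1))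
    (h2 : ∀ k, Δ (k + 1) ≤ K * (Δ k - Δ (k + 1)) + K * ‖w (k + 1) - wstar‖ ^ 2)
    (h3 : ∀ k, ‖w (k + 1) - wstar‖ ^ 2 ≤ η * Δ (k + 1)) :
    (0 < K / (1 + K - K * η) ∧ K / (1 + K - K * η) < 1) ∧
    (∀ k, Δ (k + 1) ≤ (K / (1 + K - K * η)) * Δ k) ∧
    ∃ τ > 0, ∀ k, ‖w k - wstar‖ ≤ τ * Real.sqrt (K / (1 + K - K * η)) ^ k := by
  simp only [← dist_eq_norm] at h2 h3 ⊢
  exact qlinear_values_rlinear_iterates_general w wstar Δ K η hK hη hKη h2 h3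
end
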